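/- Let q be a prime power, r ≥ 2, and let n ≥ 4 be a composite integer with smallest prime divisor ℓ. Set m = n if (r = 2 and n/ℓ is prime and n/ℓ ≤ 2ℓ − 5), and m = ℓ otherwise. Let α_{r,n} = q^{binom(r+n/m, r) + m − 3}·(1 − q^{−binom(r−1+n/m, r−1)})/(1 − q^{−1}) and β_{r,n} = 2·q^{−(1/2)·binom(r−1+n/ℓ, r−1) + 1}/(1 − q^{−1}). Then the number #D_{r,n}(F_q) of decomposable monic polynomials in F_q[x_1,…,x_r] of total degree n with vanishing constant term satisfies |#D_{r,n}(F_q) − α_{r,n}| ≤ α_{r,n}·β_{r,n}. -/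

import Mathlib

open MvPolynomial

/-- The key of a monomial in the degree-lexicographic order: first total degree, then
lexicographic comparison of exponent vectors. -/
noncomputable def degLexKey {r : ℕ} (m : Fin r →₀ ℕ) : Lex (ℕ × Lex (Fin r →₀ ℕ)) :=
  toLex (m.sum fun _ e => e, toLex m)

/-- A multivariate polynomial is monic if the coefficient of its deg-lex leading monomial is 1. -/
def MvMonic {r : ℕ} {F : Type*} [CommSemiring F] (f : MvPolynomial (Fin r) F) : Prop :=
  ∃ m ∈ f.support, (∀ m' ∈ f.support, degLexKey m' ≤ degLexKey m) ∧ f.coeff m = 1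

/-- The number of decomposable monic `r`-variate polynomials of total degree `n` with vanishing
constant term over `F`: those of the form `g ∘ h` with `g` univariate of degree at least 2 and
`h` nonconstant. -/
noncomputable def Dcount (F : Type) [Field F] (r n : ℕ) : ℕ :=
  Set.ncard {f : MvPolynomial (Fin r) F | f.totalDegree = n ∧ MvMonic f ∧
    MvPolynomial.coeff 0 f = 0 ∧
    ∃ (g : Polynomial F) (h : MvPolynomial (Fin r) F),
      2 ≤ g.natDegree ∧ 0 < h.totalDegree ∧ f = Polynomial.aeval h g}

section Collision
open Polynomial

variable {R F : Type*} [CommRing R] [IsDomain R] [Field F] [Algebra F R]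

lemma natDegree_add_aux {H D : R[X]} (h : D.natDegree < H.natDegree) :
    (H + D).natDegree = H.natDegree ∧ (H + D).leadingCoeff = H.leadingCoeff := by
  have h1 := natDegree_add_eq_left_of_natDegree_lt h
  refine ⟨h1, ?_⟩
  rw [leadingCoeff, h1, Polynomial.coeff_add, coeff_eq_zero_of_natDegree_lt h, add_zero]
  rfl

lemma pow_sub_pow_aux {H D : R[X]} (h : D.natDegree < H.natDegree) (hD : D ≠ 0)
    (A : ℕ) (hA : ((A + 1 : ℕ) : R) ≠ 0) :
    ((H + D) ^ (A + 1) - H ^ (A + 1)).natDegree = D.natDegree + A * H.natDegree ∧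
    ((H + D) ^ (A + 1) - H ^ (A + 1)).leadingCoeff =
      ((A + 1 : ℕ) : R) * (H.leadingCoeff ^ A * D.leadingCoeff) := by
  obtain ⟨hK1, hK2⟩ := natDegree_add_aux h
  have hH : H ≠ 0 := by rintro rfl; simp at h
  set K := H + D with hK
  set S := ∑ i ∈ Finset.range (A + 1), K ^ i * H ^ (A + 1 - 1 - i) with hS
  have hfac : K ^ (A + 1) - H ^ (A + 1) = S * D := by
    rw [hS, ← geom_sum₂_mul K H (A + 1)]
    congr 1
    rw [hK]; ring
  have hterm : ∀ i ∈ Finset.range (A + 1), (K ^ i * H ^ (A + 1 - 1 - i)).natDegree ≤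
      A * H.natDegree ∧ (K ^ i * H ^ (A + 1 - 1 - i)).coeff (A * H.natDegree) =
        H.leadingCoeff ^ A := by
    intro i hi
    have hi' : i ≤ A := by simpa [Nat.lt_succ_iff] using hi
    have hK0 : K ≠ 0 := by intro h0; rw [h0] at hK1; simp at hK1; omega
    have e : (K ^ i * H ^ (A + 1 - 1 - i)).natDegree = A * H.natDegree := by
      rw [natDegree_mul (pow_ne_zero _ hK0) (pow_ne_zero _ hH), natDegree_pow, natDegree_pow, hK1,
        ← add_mul]
      congr 1; omega
    refine ⟨e.le, ?_⟩
    rw [← e]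
    change leadingCoeff _ = _
    rw [leadingCoeff_mul, leadingCoeff_pow, leadingCoeff_pow, hK2, ← pow_add]
    congr 1; omega
  have hSc : S.coeff (A * H.natDegree) = ((A + 1 : ℕ) : R) * H.leadingCoeff ^ A := by
    rw [hS, finsetSum_coeff, Finset.sum_congr rfl (fun i hi => (hterm i hi).2)]
    simp
  have hne : ((A + 1 : ℕ) : R) * H.leadingCoeff ^ A ≠ 0 :=
    mul_ne_zero hA (pow_ne_zero _ (by simpa using hH))
  have hSd : S.natDegree = A * H.natDegree := by
    apply le_antisymm
    · exact natDegree_sum_le_of_forall_le _ _ (fun i hi => (hterm i hi).1)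
    · exact le_natDegree_of_ne_zero (by rw [hSc]; exact hne)
  have hSl : S.leadingCoeff = ((A + 1 : ℕ) : R) * H.leadingCoeff ^ A := by
    rw [leadingCoeff, hSd, hSc]
  have hS0 : S ≠ 0 := by intro h0; rw [h0] at hSl; exact hne (by simpa using hSl.symm)
  rw [hfac, natDegree_mul hS0 hD, leadingCoeff_mul, hSd, hSl]
  exact ⟨by ring, by ring⟩

lemma sum_natDegree_le {H D : R[X]} (h : D.natDegree < H.natDegree) (a b : ℕ → F) (N : ℕ) :
    (∑ i ∈ Finset.range (N + 1), (a i • H ^ i - b i • (H + D) ^ i)).natDegree ≤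
      N * H.natDegree := by
  obtain ⟨hK1, hK2⟩ := natDegree_add_aux h
  apply natDegree_sum_le_of_forall_le
  intro i hi
  have hi' : i ≤ N := by simpa [Nat.lt_succ_iff] using hi
  refine (natDegree_sub_le _ _).trans (max_le ?_ ?_)
  · refine (natDegree_smul_le _ _).trans (natDegree_pow_le.trans ?_)
    gcongr
  · refine (natDegree_smul_le _ _).trans (natDegree_pow_le.trans ?_)
    rw [hK1]; gcongr

lemma lead_relation {H D : R[X]} (h : D.natDegree < H.natDegree) (hD : 0 < D.natDegree)
    (l : ℕ) (hl : 1 ≤ l) (hchar : ∀ i : ℕ, 0 < i → i < l → ((i : ℕ) : F) ≠ 0) (a b : ℕ → F)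
    (ha : a 0 = 0) (hb : b 0 = 0) (N : ℕ) (hN : N ≤ l)
    (heq : D ^ l = ∑ i ∈ Finset.range N, (a i • H ^ i - b i • (H + D) ^ i)) :
    ∃ (A B : ℕ) (c : F), 1 ≤ A ∧ A < B ∧ c ≠ 0 ∧
      D.leadingCoeff ^ B = c • H.leadingCoeff ^ A := by
  obtain ⟨hK1, hK2⟩ := natDegree_add_aux h
  have hD0 : D ≠ 0 := by rintro rfl; simp at hD
  have hH0 : H ≠ 0 := by rintro rfl; simp at h
  induction N with
  | zero => simp at heq; exact absurd heq.1 hD0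
  | succ N ih =>
    rcases Nat.eq_zero_or_pos N with rfl | hNpos
    · simp [ha, hb] at heq; exact absurd heq.1 hD0
    obtain ⟨M, rfl⟩ : ∃ M, N = M + 1 := ⟨N - 1, by omega⟩
    rw [Finset.sum_range_succ] at heq
    set S := ∑ i ∈ Finset.range (M + 1), (a i • H ^ i - b i • (H + D) ^ i) with hS
    have hSle : S.natDegree ≤ M * H.natDegree := sum_natDegree_le h a b M
    have hL : (D ^ l).natDegree = l * D.natDegree := natDegree_pow _ _
    have hLc : (D ^ l).leadingCoeff = D.leadingCoeff ^ l := leadingCoeff_pow _ _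
    by_cases hab : a (M + 1) = b (M + 1)
    · by_cases hz : b (M + 1) = 0
      · apply ih (by omega)
        rw [heq, hab, hz]; simp
      · have hne : ((M + 1 : ℕ) : R) ≠ 0 := by
          have := hchar (M + 1) (by omega) (by omega)
          have h2 := (map_ne_zero_iff _ (algebraMap F R).injective).2 this
          simpa using h2
        obtain ⟨p1, p2⟩ := pow_sub_pow_aux h hD0 M hne
        set P := (H + D) ^ (M + 1) - H ^ (M + 1) with hP
        have hT : a (M + 1) • H ^ (M + 1) - b (M + 1) • (H + D) ^ (M + 1) =
            (-b (M + 1)) • P := by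
          rw [hab, hP, smul_sub, neg_smul, neg_smul]; ring
        rw [hT, add_comm] at heq
        have hTd : ((-b (M + 1)) • P).natDegree = P.natDegree :=
          natDegree_smul P (neg_ne_zero.2 hz)
        have hTl : ((-b (M + 1)) • P).leadingCoeff = (-b (M + 1)) • P.leadingCoeff := by
          rw [leadingCoeff, hTd, Polynomial.coeff_smul]; rfl
        have hlt : S.natDegree < ((-b (M + 1)) • P).natDegree := by rw [hTd, p1]; omega
        obtain ⟨q1, q2⟩ := natDegree_add_aux hlt
        rw [← heq, hL, hTd, p1] at q1
        rw [← heq, hLc, hTl, p2] at q2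
        have hMl : M + 1 < l := by omega
        obtain ⟨l', rfl⟩ : ∃ l', l = l' + 1 := ⟨l - 1, by omega⟩
        have hyne : D.leadingCoeff ≠ 0 := by simpa using hD0
        refine ⟨M, l', (-b (M + 1)) * ((M + 1 : ℕ) : F), ?_, by omega, ?_, ?_⟩
        · rcases Nat.eq_zero_or_pos M with rfl | h'
          · simp at q1; nlinarith
          · exact h'
        · exact mul_ne_zero (neg_ne_zero.2 hz) (hchar _ (by omega) (by omega))
        · apply mul_right_cancel₀ hyne
          rw [← pow_succ, q2]
          simp only [Algebra.smul_def, map_mul, map_natCast]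
          ring
    · set T := a (M + 1) • H ^ (M + 1) - b (M + 1) • (H + D) ^ (M + 1) with hT
      have hTc : T.coeff ((M + 1) * H.natDegree) =
          (a (M + 1) - b (M + 1)) • H.leadingCoeff ^ (M + 1) := by
        have e1 : (H ^ (M + 1)).coeff ((M + 1) * H.natDegree) = H.leadingCoeff ^ (M + 1) := by
          rw [← natDegree_pow]; exact leadingCoeff_pow _ _
        have e2 : ((H + D) ^ (M + 1)).coeff ((M + 1) * H.natDegree) =
            H.leadingCoeff ^ (M + 1) := by
          rw [← hK1, ← natDegree_pow, ← hK2]; exact leadingCoeff_pow _ _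
        rw [hT, Polynomial.coeff_sub, Polynomial.coeff_smul, Polynomial.coeff_smul, e1, e2, sub_smul]
      have hTne : (a (M + 1) - b (M + 1)) • H.leadingCoeff ^ (M + 1) ≠ 0 :=
        smul_ne_zero (sub_ne_zero.2 hab) (pow_ne_zero _ (by simpa using hH0))
      have hTd : T.natDegree = (M + 1) * H.natDegree := by
        apply le_antisymm
        · refine (natDegree_sub_le _ _).trans (max_le ?_ ?_)
          · exact (natDegree_smul_le _ _).trans natDegree_pow_le
          · refine (natDegree_smul_le _ _).trans (natDegree_pow_le.trans ?_)
            rw [hK1]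
        · exact le_natDegree_of_ne_zero (by rw [hTc]; exact hTne)
      have hTl : T.leadingCoeff = (a (M + 1) - b (M + 1)) • H.leadingCoeff ^ (M + 1) := by
        rw [leadingCoeff, hTd, hTc]
      have hlt : S.natDegree < T.natDegree := by
        rw [hTd]; have : 0 < H.natDegree := by omega
        nlinarith
      obtain ⟨q1, q2⟩ := natDegree_add_aux hlt
      rw [add_comm] at heq
      rw [← heq, hLc, hTl] at q2
      exact ⟨M + 1, l, a (M + 1) - b (M + 1), by omega, by omega, sub_ne_zero.2 hab, q2⟩

/-- if `l` is invertible there is no collision -/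
lemma no_collision {H D : R[X]} (h : D.natDegree < H.natDegree) (hD : 0 < D.natDegree)
    (l : ℕ) (hl : 1 ≤ l) (hlF : (l : F) ≠ 0) (a b : ℕ → F)
    (heq : (H + D) ^ l - H ^ l =
      ∑ i ∈ Finset.range l, (a i • H ^ i - b i • (H + D) ^ i)) : False := by
  have hD0 : D ≠ 0 := by rintro rfl; simp at hD
  obtain ⟨M, rfl⟩ : ∃ M, l = M + 1 := ⟨l - 1, by omega⟩
  have hne : ((M + 1 : ℕ) : R) ≠ 0 := by
    have h2 := (map_ne_zero_iff _ (algebraMap F R).injective).2 hlF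
    simpa using h2
  have p1 := (pow_sub_pow_aux h hD0 M hne).1
  rw [heq] at p1
  have := sum_natDegree_le h a b M
  omega

/-- power lemma -/
lemma proper_power_of_rel [IsIntegrallyClosed R] {x y : R} (hx : x ≠ 0) {A B : ℕ} (hA : 1 ≤ A)
    (hAB : A < B) {c : F} (hc : c ≠ 0) (h : y ^ B = c • x ^ A) :
    ∃ (t : ℕ) (u v : R), 2 ≤ t ∧ IsUnit v ∧ x = v * u ^ t := by
  classical
  let K := FractionRing R
  let f : R →+* K := algebraMap R K
  have finj : Function.Injective f := IsFractionRing.injective R K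
  have hgpos : 0 < Nat.gcd A B := Nat.gcd_pos_of_pos_left _ hA
  obtain ⟨A', B', hcop, hA', hB'⟩ := Nat.exists_coprime A B
  set g := Nat.gcd A B with hg
  have hA'pos : 0 < A' := by
    rcases Nat.eq_zero_or_pos A' with h0 | h0
    · rw [h0] at hA'; omega
    · exact h0
  have hAB' : A' < B' := by
    by_contra hcon
    have : B' * g ≤ A' * g := Nat.mul_le_mul_right _ (by omega)
    omega
  have hy : y ≠ 0 := by
    rintro rfl
    rw [zero_pow (by omega)] at h
    exact smul_ne_zero hc (pow_ne_zero _ hx) h.symm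
  have fx : f x ≠ 0 := by simpa [finj.eq_iff] using (map_ne_zero_iff f finj).2 hx
  have fy : f y ≠ 0 := (map_ne_zero_iff f finj).2 hy
  have hw : ((f y) ^ B' / (f x) ^ A') ^ g = f (algebraMap F R c) := by
    rw [div_pow, ← pow_mul, ← pow_mul, ← hA', ← hB', ← map_pow, h, Algebra.smul_def, map_mul,
      map_pow, mul_div_assoc, div_self (pow_ne_zero _ fx), mul_one]
  obtain ⟨w, hwe⟩ := IsIntegrallyClosed.exists_algebraMap_eq_of_isIntegral_pow (R := R) (K := K)
    hgpos (x := (f y) ^ B' / (f x) ^ A') (by rw [hw]; exact isIntegral_algebraMap)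
  have hwg : w ^ g = algebraMap F R c := by
    apply finj
    rw [map_pow, ← hw]; congr 1
  have hwu : IsUnit w := by
    have : IsUnit (w ^ g) := by rw [hwg]; exact (IsUnit.mk0 c hc).map _
    exact (isUnit_pow_iff (by omega)).1 this
  have hyx : f y ^ B' = f w * f x ^ A' := by
    have : f w = (f y) ^ B' / (f x) ^ A' := hwe
    rw [this, div_mul_cancel₀ _ (pow_ne_zero _ fx)]
  obtain ⟨s, -, hs⟩ := Nat.exists_mul_mod_eq_one_of_coprime hcop (by omega)
  have hsB : A' * s = B' * (A' * s / B') + 1 := by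
    have := Nat.div_add_mod (A' * s) B'
    omega
  set m := A' * s / B' with hm
  have hz : (f y ^ s / f x ^ m) ^ B' = f (w ^ s * x) := by
    rw [div_pow, ← pow_mul, mul_comm s B', pow_mul, hyx, mul_pow, ← pow_mul, hsB, ← pow_mul,
      mul_comm m B', pow_succ, map_mul, map_pow]
    rw [div_eq_iff (pow_ne_zero _ fx)]; ring
  obtain ⟨z, hze⟩ := IsIntegrallyClosed.exists_algebraMap_eq_of_isIntegral_pow (R := R) (K := K)
    (n := B') (by omega) (x := f y ^ s / f x ^ m) (by rw [hz]; exact isIntegral_algebraMap)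
  have hzx : z ^ B' = w ^ s * x := by
    apply finj
    rw [map_pow, ← hz]; congr 1
  obtain ⟨v, hv⟩ := (hwu.pow s)
  refine ⟨B', z, ↑v⁻¹, by omega, Units.isUnit _, ?_⟩
  rw [hzx, ← hv, Units.inv_mul_cancel_left]

end Collision
section Top
open MonomialOrder

variable {r : ℕ} {F : Type*} [Field F]

lemma degLexKey_le_iff (a b : Fin r →₀ ℕ) :
    degLexKey a ≤ degLexKey b ↔ a ≼[degLex] b := by
  rw [MonomialOrder.degLex_le_iff, Finsupp.DegLex.le_iff]
  unfold degLexKey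
  rw [Prod.Lex.toLex_le_toLex]
  rfl

lemma mvMonic_iff (f : MvPolynomial (Fin r) F) :
    MvMonic f ↔ degLex.leadingCoeff f = 1 := by
  constructor
  · rintro ⟨m, hm, hmax, h1⟩
    have hf : f ≠ 0 := by rintro rfl; simp at hm
    have e : degLex.degree f = m := by
      apply degLex.toSyn.injective
      apply le_antisymm
      · exact (degLexKey_le_iff _ _).1 (hmax _ (degLex.degree_mem_support hf))
      · exact degLex.le_degree hm
    rw [leadingCoeff, e, h1]
  · intro h
    have hf : f ≠ 0 := by rintro rfl; simp at h
    exact ⟨degLex.degree f, degLex.degree_mem_support hf,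
      fun m' hm' => (degLexKey_le_iff _ _).2 (degLex.le_degree hm'), h⟩

noncomputable def theta (r : ℕ) (F : Type*) [Field F] :
    MvPolynomial (Fin r) F →ₐ[F] Polynomial (MvPolynomial (Fin r) F) :=
  MvPolynomial.aeval (fun i => Polynomial.C (X i) * Polynomial.X)

lemma theta_monomial (m : Fin r →₀ ℕ) (c : F) :
    theta r F (monomial m c) = Polynomial.C (monomial m c) * Polynomial.X ^ m.degree := by
  rw [theta, aeval_monomial, monomial_eq, Finsupp.prod, Finsupp.prod]
  simp only [mul_pow, Finset.prod_mul_distrib]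
  rw [Finset.prod_pow_eq_pow_sum, map_mul, map_prod]
  simp only [map_pow]
  rw [← mul_assoc]
  rfl

lemma coeff_theta (f : MvPolynomial (Fin r) F) (i : ℕ) :
    (theta r F f).coeff i = homogeneousComponent i f := by
  induction f using MvPolynomial.induction_on' with
  | monomial m c =>
    rw [theta_monomial, Polynomial.coeff_C_mul, Polynomial.coeff_X_pow]
    split_ifs with h
    · rw [mul_one, homogeneousComponent_of_mem (m := i) (n := m.degree)]
      · simp [h]
      · exact isHomogeneous_monomial _ rfl
    · rw [mul_zero, homogeneousComponent_of_mem (m := i) (n := m.degree)]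
      · simp [h]
      · exact isHomogeneous_monomial _ rfl
  | add p q hp hq => simp [hp, hq]

/-- the top homogeneous part -/
noncomputable def top (f : MvPolynomial (Fin r) F) : MvPolynomial (Fin r) F :=
  homogeneousComponent f.totalDegree f

lemma coeff_top_degree (f : MvPolynomial (Fin r) F) :
    (top f).coeff (degLex.degree f) = degLex.leadingCoeff f := by
  rw [top, coeff_homogeneousComponent, if_pos (degree_degLexDegree)]
  rfl

lemma top_ne_zero {f : MvPolynomial (Fin r) F} (hf : f ≠ 0) : top f ≠ 0 := by
  intro h
  have := coeff_top_degree f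
  rw [h] at this
  simp at this
  exact hf (by simpa using this.symm)

lemma natDegree_theta (f : MvPolynomial (Fin r) F) :
    (theta r F f).natDegree = f.totalDegree := by
  by_cases hf : f = 0
  · simp [hf]
  apply le_antisymm
  · rw [Polynomial.natDegree_le_iff_coeff_eq_zero]
    intro N hN
    rw [coeff_theta, homogeneousComponent_eq_zero _ _ hN]
  · apply Polynomial.le_natDegree_of_ne_zero
    rw [coeff_theta]
    exact top_ne_zero hf

lemma leadingCoeff_theta (f : MvPolynomial (Fin r) F) :
    (theta r F f).leadingCoeff = top f := by
  rw [Polynomial.leadingCoeff, natDegree_theta, coeff_theta, top]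

lemma theta_injective : Function.Injective (theta r F) := by
  rw [injective_iff_map_eq_zero]
  intro f h
  by_contra hf
  have := leadingCoeff_theta f
  rw [h] at this
  exact top_ne_zero hf (by simpa using this.symm)

lemma top_mul (f g : MvPolynomial (Fin r) F) : top (f * g) = top f * top g := by
  rw [← leadingCoeff_theta, map_mul, Polynomial.leadingCoeff_mul, leadingCoeff_theta,
    leadingCoeff_theta]

lemma top_pow (f : MvPolynomial (Fin r) F) (n : ℕ) : top (f ^ n) = top f ^ n := by
  rw [← leadingCoeff_theta, map_pow, Polynomial.leadingCoeff_pow, leadingCoeff_theta]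

lemma top_isHomogeneous (f : MvPolynomial (Fin r) F) : (top f).IsHomogeneous f.totalDegree :=
  homogeneousComponent_isHomogeneous _ _

lemma top_of_isHomogeneous {f : MvPolynomial (Fin r) F} {n : ℕ} (h : f.IsHomogeneous n) :
    top f = f := by
  by_cases hf : f = 0
  · simp [hf, top]
  rw [top, h.totalDegree hf, homogeneousComponent_of_mem h, if_pos rfl]

lemma degree_top {f : MvPolynomial (Fin r) F} (hf : f ≠ 0) :
    degLex.degree (top f) = degLex.degree f := by
  apply degLex.toSyn.injective
  apply le_antisymm
  · apply degLex.degree_le_degree_of_support_subset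
    intro d hd
    rw [mem_support_iff, top, coeff_homogeneousComponent] at hd
    rw [mem_support_iff]
    split_ifs at hd with h1
    · exact hd
    · exact absurd rfl hd
  · apply degLex.le_degree
    rw [mem_support_iff, coeff_top_degree]
    simpa using hf

lemma leadingCoeff_top (f : MvPolynomial (Fin r) F) :
    degLex.leadingCoeff (top f) = degLex.leadingCoeff f := by
  by_cases hf : f = 0
  · simp [hf, top]
  rw [leadingCoeff, degree_top hf, coeff_top_degree]

lemma leadingCoeff_C_mul' (c : F) (f : MvPolynomial (Fin r) F) :
    degLex.leadingCoeff (C c * f) = c * degLex.leadingCoeff f := by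
  rw [leadingCoeff_mul, leadingCoeff_C]

lemma eq_zero_of_totalDegree_zero {f : MvPolynomial (Fin r) F} (h : f.totalDegree = 0)
    (h0 : f.coeff 0 = 0) : f = 0 := by
  rw [totalDegree_eq_zero_iff_eq_C] at h
  rw [h, h0, C_0]

/-- being a proper power up to units -/
def ProperPow (x : MvPolynomial (Fin r) F) : Prop :=
  ∃ (t : ℕ) (u v : MvPolynomial (Fin r) F), 2 ≤ t ∧ IsUnit v ∧ x = v * u ^ t

lemma properPow_monic {x : MvPolynomial (Fin r) F} {k : ℕ} (hx : x.IsHomogeneous k)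
    (h1 : degLex.leadingCoeff x = 1) (hp : ProperPow x) :
    ∃ (t i : ℕ) (u : MvPolynomial (Fin r) F), 2 ≤ t ∧ t * i = k ∧ u.IsHomogeneous i ∧
      degLex.leadingCoeff u = 1 ∧ x = u ^ t := by
  obtain ⟨t, u, v, ht, hv, hxe⟩ := hp
  obtain ⟨c, hc, rfl⟩ := MvPolynomial.isUnit_iff_eq_C_of_isReduced.1 hv
  have hu : u ≠ 0 := by
    rintro rfl
    rw [hxe, zero_pow (by omega)] at h1
    simp at h1
  set b := degLex.leadingCoeff u with hb
  have hb0 : b ≠ 0 := by simpa [hb] using hu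
  have hxt : x = C c * top u ^ t := by
    rw [← top_of_isHomogeneous hx, hxe, top_mul, top_pow,
      top_of_isHomogeneous (isHomogeneous_C _ c)]
  have hcb : c * b ^ t = 1 := by
    rw [← h1, hxt, leadingCoeff_mul, leadingCoeff_C, leadingCoeff_pow, leadingCoeff_top]
  set u' := C b⁻¹ * top u with hu'
  have hu'0 : u' ≠ 0 := mul_ne_zero (by simpa using hb0) (top_ne_zero hu)
  have hxu : x = u' ^ t := by
    rw [hxt, hu', mul_pow, ← map_pow]
    congr 2
    rw [inv_pow]; field_simp; exact hcb
  have hhom : u'.IsHomogeneous u.totalDegree := by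
    rw [hu']
    have := (isHomogeneous_C (Fin r) b⁻¹).mul (top_isHomogeneous u)
    simpa using this
  refine ⟨t, u.totalDegree, u', ht, ?_, hhom, ?_, hxu⟩
  · have h2 := hhom.pow t
    rw [← hxu] at h2
    have hx0 : x ≠ 0 := by rintro rfl; simp at h1
    have := hx.inj_right h2 hx0
    rw [this, mul_comm]
  · rw [hu', leadingCoeff_C_mul', leadingCoeff_top, inv_mul_cancel₀ hb0]

lemma collision_top {l : ℕ} (hl : 1 ≤ l) {h₁ h₂ : MvPolynomial (Fin r) F} {k : ℕ} (hk : 0 < k)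
    (d1 : h₁.totalDegree = k) (d2 : h₂.totalDegree = k)
    (m1 : degLex.leadingCoeff h₁ = 1) (m2 : degLex.leadingCoeff h₂ = 1)
    (a b : ℕ → F)
    (heq : h₁ ^ l + ∑ i ∈ Finset.range l, a i • h₁ ^ i =
      h₂ ^ l + ∑ i ∈ Finset.range l, b i • h₂ ^ i) :
    top h₁ = top h₂ := by
  set H := theta r F h₁ with hH
  set K := theta r F h₂ with hK
  have heq' : H ^ l + ∑ i ∈ Finset.range l, a i • H ^ i =
      K ^ l + ∑ i ∈ Finset.range l, b i • K ^ i := by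
    have := congrArg (theta r F) heq
    simpa [map_add, map_sum, map_pow] using this
  have hHd : H.natDegree = k := by rw [hH, natDegree_theta, d1]
  have hKd : K.natDegree = k := by rw [hK, natDegree_theta, d2]
  have hHl : H.leadingCoeff = top h₁ := leadingCoeff_theta _
  have hKl : K.leadingCoeff = top h₂ := leadingCoeff_theta _
  have hlt : ∀ (P : Polynomial (MvPolynomial (Fin r) F)) (hP : P.natDegree = k) (c : ℕ → F),
      (P ^ l + ∑ i ∈ Finset.range l, c i • P ^ i).leadingCoeff = P.leadingCoeff ^ l := by
    intro P hP c
    have h1 : (∑ i ∈ Finset.range l, c i • P ^ i).natDegree < (P ^ l).natDegree := by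
      rw [Polynomial.natDegree_pow, hP]
      have : (∑ i ∈ Finset.range l, c i • P ^ i).natDegree ≤ (l - 1) * k := by
        apply Polynomial.natDegree_sum_le_of_forall_le
        intro i hi
        have hi' : i ≤ l - 1 := by have := Finset.mem_range.1 hi; omega
        refine (Polynomial.natDegree_smul_le _ _).trans (Polynomial.natDegree_pow_le.trans ?_)
        rw [hP]; gcongr
      have h3 : (l - 1) * k < l * k := Nat.mul_lt_mul_of_pos_right (by omega) hk
      omega
    rw [(natDegree_add_aux h1).2, Polynomial.leadingCoeff_pow]
  have htop : top h₁ ^ l = top h₂ ^ l := by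
    rw [← hHl, ← hKl, ← hlt H hHd a, ← hlt K hKd b, heq']
  have hne1 : h₁ ≠ 0 := by rintro rfl; simp at m1
  have hne2 : h₂ ≠ 0 := by rintro rfl; simp at m2
  have hd1 : top h₁ ∣ top h₂ :=
      (IsIntegrallyClosed.pow_dvd_pow_iff (n := l) (by omega)).1 (dvd_of_eq htop)
  have hd2 : top h₂ ∣ top h₁ :=
      (IsIntegrallyClosed.pow_dvd_pow_iff (n := l) (by omega)).1 (dvd_of_eq htop.symm)
  obtain ⟨v, hv⟩ := associated_of_dvd_dvd hd1 hd2
  obtain ⟨c, hc, hcv⟩ := MvPolynomial.isUnit_iff_eq_C_of_isReduced.1 v.isUnit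
  rw [hcv] at hv
  have h1 := congrArg degLex.leadingCoeff hv
  rw [leadingCoeff_mul, leadingCoeff_C, leadingCoeff_top, leadingCoeff_top, m1, m2, one_mul] at h1
  rw [← hv, h1]; simp

lemma coeffs_eq {l : ℕ} {h : MvPolynomial (Fin r) F} {k : ℕ} (hk : 0 < k)
    (hd : h.totalDegree = k) (a b : ℕ → F)
    (heq : ∑ i ∈ Finset.range l, a i • h ^ i = ∑ i ∈ Finset.range l, b i • h ^ i) :
    ∀ i < l, a i = b i := by
  have key : ∀ (N : ℕ) (c : ℕ → F), ∑ i ∈ Finset.range N, c i • (theta r F h) ^ i = 0 →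
      ∀ i < N, c i = 0 := by
    intro N c
    have hHd : (theta r F h).natDegree = k := by rw [natDegree_theta, hd]
    set H := theta r F h
    have hH0 : H ≠ 0 := by intro h0; rw [h0] at hHd; simp at hHd; omega
    induction N with
    | zero => intro _ i hi; omega
    | succ N ih =>
      intro hs
      rw [Finset.sum_range_succ] at hs
      have hcN : c N = 0 := by
        have h1 := congrArg (fun P => Polynomial.coeff P (N * k)) hs
        simp only [Polynomial.coeff_add, Polynomial.coeff_smul, Polynomial.coeff_zero] at h1
        have e1 : (H ^ N).coeff (N * k) = H.leadingCoeff ^ N := by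
          rw [← hHd, ← Polynomial.natDegree_pow]; exact Polynomial.leadingCoeff_pow _ _
        have e2 : (∑ i ∈ Finset.range N, c i • H ^ i).coeff (N * k) = 0 := by
          rw [Polynomial.finsetSum_coeff]
          apply Finset.sum_eq_zero
          intro i hi
          rw [Polynomial.coeff_smul, Polynomial.coeff_eq_zero_of_natDegree_lt, smul_zero]
          rw [Polynomial.natDegree_pow, hHd]
          exact Nat.mul_lt_mul_of_pos_right (Finset.mem_range.1 hi) hk
        rw [e1, e2, zero_add] at h1
        rcases smul_eq_zero.1 h1 with h2 | h2
        · exact h2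
        · exact absurd h2 (pow_ne_zero _ (by simpa using hH0))
      rw [hcN, zero_smul, add_zero] at hs
      intro i hi
      rcases Nat.lt_succ_iff_lt_or_eq.1 hi with h2 | h2
      · exact ih hs i h2
      · rw [h2, hcN]
  intro i hi
  have := key l (fun i => a i - b i) (by
    have := congrArg (theta r F) heq
    simp only [map_sum, map_smul, map_pow] at this
    simp only [sub_smul, Finset.sum_sub_distrib, this, sub_self]) i hi
  exact sub_eq_zero.1 this

lemma collision_inj {l : ℕ} (hl : l.Prime) {h₁ h₂ : MvPolynomial (Fin r) F} {k : ℕ} (hk : 0 < k)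
    (d1 : h₁.totalDegree = k) (d2 : h₂.totalDegree = k)
    (m1 : degLex.leadingCoeff h₁ = 1) (m2 : degLex.leadingCoeff h₂ = 1)
    (z1 : h₁.coeff 0 = 0) (z2 : h₂.coeff 0 = 0) (hp : ¬ ProperPow (top h₁))
    (a b : ℕ → F) (ha : a 0 = 0) (hb : b 0 = 0)
    (heq : h₁ ^ l + ∑ i ∈ Finset.range l, a i • h₁ ^ i =
      h₂ ^ l + ∑ i ∈ Finset.range l, b i • h₂ ^ i) :
    h₁ = h₂ ∧ ∀ i < l, a i = b i := by
  have hl2 := hl.two_le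
  have htop' := collision_top hl.one_le hk d1 d2 m1 m2 a b heq
  have hne1 : h₁ ≠ 0 := by rintro rfl; simp at m1
  set H := theta r F h₁ with hH
  set K := theta r F h₂ with hK
  have heq' : H ^ l + ∑ i ∈ Finset.range l, a i • H ^ i =
      K ^ l + ∑ i ∈ Finset.range l, b i • K ^ i := by
    have := congrArg (theta r F) heq
    simpa [map_add, map_sum, map_pow] using this
  have hHd : H.natDegree = k := by rw [hH, natDegree_theta, d1]
  have hKd : K.natDegree = k := by rw [hK, natDegree_theta, d2]
  have hHl : H.leadingCoeff = top h₁ := leadingCoeff_theta _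
  have hKl : K.leadingCoeff = top h₂ := leadingCoeff_theta _
  have hδ : h₂ - h₁ = 0 := by
    by_contra hδ
    set D := K - H with hD
    have hDθ : D = theta r F (h₂ - h₁) := by rw [hD, map_sub]
    have hDpos : 0 < D.natDegree := by
      rw [hDθ, natDegree_theta]
      rcases Nat.eq_zero_or_pos (h₂ - h₁).totalDegree with h0 | h0
      · exact absurd (eq_zero_of_totalDegree_zero h0 (by simp [z1, z2])) hδ
      · exact h0
    have hDlt : D.natDegree < H.natDegree := by
      have hle : D.natDegree ≤ k := by
        refine (Polynomial.natDegree_sub_le _ _).trans ?_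
        simp [hHd, hKd]
      have hck : D.coeff k = 0 := by
        rw [hD, Polynomial.coeff_sub]
        have e1 : K.coeff k = top h₂ := by rw [← hKl, Polynomial.leadingCoeff, hKd]
        have e2 : H.coeff k = top h₁ := by rw [← hHl, Polynomial.leadingCoeff, hHd]
        rw [e1, e2, htop', sub_self]
      rw [hHd]
      rcases lt_or_eq_of_le hle with h | h
      · exact h
      · exfalso
        rw [← h] at hck
        have : D = 0 := by simpa using hck
        rw [this] at hDpos; simp at hDpos
    have hKHD : K = H + D := by rw [hD]; ring
    have hrel : (H + D) ^ l - H ^ l =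
        ∑ i ∈ Finset.range l, (a i • H ^ i - b i • (H + D) ^ i) := by
      rw [Finset.sum_sub_distrib, ← hKHD, sub_eq_sub_iff_add_eq_add, ← heq']
      ring
    by_cases hlF : (l : F) = 0
    · have : Fact l.Prime := ⟨hl⟩
      have hchF : CharP F l := by
        have h1 : ringChar F ∣ l := (ringChar.spec F l).1 hlF
        rcases (Nat.dvd_prime hl).1 h1 with h2 | h2
        · exfalso
          exact CharP.ringChar_ne_one h2
        · exact ringChar.of_eq h2
      have : CharP (MvPolynomial (Fin r) F) l := inferInstance
      have hadd : (H + D) ^ l - H ^ l = D ^ l := by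
        rw [add_pow_char]; ring
      rw [hadd] at hrel
      obtain ⟨A, B, c, hA, hAB, hc, hxy⟩ := lead_relation hDlt hDpos l (by omega)
        (by
          intro i hi hil h0
          have := (CharP.cast_eq_zero_iff F l i).1 h0
          exact absurd (Nat.le_of_dvd hi this) (by omega)) a b ha hb l le_rfl hrel
      apply hp
      rw [← hHl]
      exact proper_power_of_rel (by rw [hHl]; exact top_ne_zero hne1) hA hAB hc hxy
    · exact no_collision hDlt hDpos l (by omega) hlF a b hrel
  have h12 : h₁ = h₂ := (sub_eq_zero.1 hδ).symm
  refine ⟨h12, ?_⟩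
  subst h12
  exact coeffs_eq hk d1 a b (add_left_cancel heq)

lemma collision_inj_linear {l : ℕ} (hl : 1 ≤ l) {h₁ h₂ : MvPolynomial (Fin r) F}
    (d1 : h₁.totalDegree = 1) (d2 : h₂.totalDegree = 1)
    (m1 : degLex.leadingCoeff h₁ = 1) (m2 : degLex.leadingCoeff h₂ = 1)
    (z1 : h₁.coeff 0 = 0) (z2 : h₂.coeff 0 = 0)
    (a b : ℕ → F)
    (heq : h₁ ^ l + ∑ i ∈ Finset.range l, a i • h₁ ^ i =
      h₂ ^ l + ∑ i ∈ Finset.range l, b i • h₂ ^ i) :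
    h₁ = h₂ ∧ ∀ i < l, a i = b i := by
  have htop' := collision_top hl one_pos d1 d2 m1 m2 a b heq
  have key : ∀ h : MvPolynomial (Fin r) F, h.totalDegree = 1 → h.coeff 0 = 0 → h = top h := by
    intro h hd hz
    have := sum_homogeneousComponent h
    rw [hd, Finset.sum_range_succ, Finset.sum_range_one, homogeneousComponent_zero, hz] at this
    rw [C_0, zero_add] at this
    rw [top, hd]; exact this.symm
  have h12 : h₁ = h₂ := by rw [key h₁ d1 z1, key h₂ d2 z2, htop']
  refine ⟨h12, ?_⟩
  subst h12
  exact coeffs_eq one_pos d1 a b (add_left_cancel heq)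

end Top
section Count
open MonomialOrder

variable {r : ℕ} {F : Type*} [Field F]

/-- polynomials supported in `s` -/
def SP (F : Type*) [Field F] (s : Finset (Fin r →₀ ℕ)) : Set (MvPolynomial (Fin r) F) :=
  {f | f.support ⊆ s}

/-- monic polynomials supported in `s` -/
def SM (F : Type*) [Field F] (s : Finset (Fin r →₀ ℕ)) : Set (MvPolynomial (Fin r) F) :=
  {f | f.support ⊆ s ∧ degLex.leadingCoeff f = 1}

lemma ncard_SP [Fintype F] (s : Finset (Fin r →₀ ℕ)) :
    (SP F s).ncard = Fintype.card F ^ s.card := by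
  classical
  have e : SP F s ≃ (s → F) := Equiv.ofBijective (fun f i => (f : MvPolynomial (Fin r) F).coeff i) (by
    constructor
    · rintro ⟨f, hf⟩ ⟨g, hg⟩ h
      ext m
      by_cases hm : m ∈ s
      · exact congrFun h ⟨m, hm⟩
      · have h1 : m ∉ f.support := fun h => hm (hf h)
        have h2 : m ∉ g.support := fun h => hm (hg h)
        rw [notMem_support_iff] at h1 h2
        rw [h1, h2]
    · intro g
      have hc : ∀ m, coeff m (∑ i : s, monomial (i : Fin r →₀ ℕ) (g i)) =
          if h : m ∈ s then g ⟨m, h⟩ else 0 := by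
        intro m
        rw [coeff_sum]
        simp only [coeff_monomial]
        split_ifs with h
        · rw [Finset.sum_eq_single ⟨m, h⟩]
          · simp
          · intro b _ hb
            rw [if_neg]
            intro h'; exact hb (Subtype.ext h')
          · simp
        · apply Finset.sum_eq_zero
          intro b _
          rw [if_neg]
          intro h'; exact h (h' ▸ b.2)
      refine ⟨⟨∑ i : s, monomial (i : Fin r →₀ ℕ) (g i), ?_⟩, ?_⟩
      · intro m hm
        rw [mem_support_iff, hc] at hm
        by_contra h
        exact hm (by rw [dif_neg h])
      · funext i
        simp only [hc]
        rw [dif_pos i.2])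
  rw [← Nat.card_coe_set_eq, Nat.card_congr e]
  simp

lemma finite_SP [Fintype F] (s : Finset (Fin r →₀ ℕ)) : (SP F s).Finite := by
  apply Set.finite_of_ncard_pos
  rw [ncard_SP]
  exact pow_pos Fintype.card_pos _

lemma SM_subset (s : Finset (Fin r →₀ ℕ)) : SM F s ⊆ SP F s := fun _ h => h.1

lemma finite_SM [Fintype F] (s : Finset (Fin r →₀ ℕ)) : (SM F s).Finite :=
  (finite_SP s).subset (SM_subset s)

lemma support_C_mul_subset (c : F) (f : MvPolynomial (Fin r) F) : (C c * f).support ⊆ f.support := by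
  intro m hm
  rw [mem_support_iff, coeff_C_mul] at hm
  rw [mem_support_iff]
  exact right_ne_zero_of_mul hm

lemma ncard_SM [Fintype F] (s : Finset (Fin r →₀ ℕ)) :
    (Fintype.card F - 1) * (SM F s).ncard + 1 = Fintype.card F ^ s.card := by
  classical
  have himg : (fun p : F × MvPolynomial (Fin r) F => C p.1 * p.2) '' (({0}ᶜ : Set F) ×ˢ SM F s) =
      SP F s \ {0} := by
    ext f
    constructor
    · rintro ⟨⟨c, g⟩, ⟨hc, hg⟩, rfl⟩
      have hc' : c ≠ 0 := hc
      have hg0 : g ≠ 0 := by rintro rfl; have := hg.2; simp at this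
      refine ⟨(support_C_mul_subset c g).trans hg.1, ?_⟩
      exact mul_ne_zero (by simpa using hc') hg0
    · rintro ⟨hf, hf0⟩
      have hf0' : f ≠ 0 := hf0
      have hlc : degLex.leadingCoeff f ≠ 0 := by simpa using hf0'
      refine ⟨(degLex.leadingCoeff f, C (degLex.leadingCoeff f)⁻¹ * f), ⟨hlc, ?_, ?_⟩, ?_⟩
      · exact (support_C_mul_subset _ f).trans hf
      · rw [leadingCoeff_C_mul', inv_mul_cancel₀ hlc]
      · simp only
        rw [← mul_assoc, ← map_mul, mul_inv_cancel₀ hlc, C_1, one_mul]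
  have hinj : Set.InjOn (fun p : F × MvPolynomial (Fin r) F => C p.1 * p.2)
      (({0}ᶜ : Set F) ×ˢ SM F s) := by
    rintro ⟨c, f⟩ ⟨hc, hf⟩ ⟨d, g⟩ ⟨hd, hg⟩ h
    simp only at h
    have h1 := congrArg degLex.leadingCoeff h
    rw [leadingCoeff_C_mul', leadingCoeff_C_mul', hf.2, hg.2, mul_one, mul_one] at h1
    subst h1
    have hc' : c ≠ 0 := hc
    have := mul_left_cancel₀ (by simpa using hc') h
    rw [this]
  have h1 := hinj.ncard_image
  rw [himg, Set.ncard_prod, Set.ncard_sdiff_singleton_of_mem (by simp [SP]), ncard_SP,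
    Set.ncard_compl, Set.ncard_singleton, Nat.card_eq_fintype_card] at h1
  rw [← h1]
  have : 0 < Fintype.card F ^ s.card := pow_pos Fintype.card_pos _
  omega

/-- exponents of degree `d` -/
noncomputable def Ex (r d : ℕ) : Finset (Fin r →₀ ℕ) := Finset.finsuppAntidiag Finset.univ d

lemma mem_Ex {d : ℕ} {m : Fin r →₀ ℕ} : m ∈ Ex r d ↔ m.degree = d := by
  rw [Ex, Finset.mem_finsuppAntidiag, Finsupp.degree_eq_sum]
  simp

lemma card_Ex (hr : 1 ≤ r) (d : ℕ) : (Ex r d).card = Nat.choose (r - 1 + d) (r - 1) := by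
  rw [Ex, Finset.card_finsuppAntidiag_nat_eq_choose]
  simp only [Finset.card_univ, Fintype.card_fin]
  rw [show r + d - 1 = r - 1 + d by omega, Nat.choose_symm_add]

/-- exponents of degree between `1` and `d` -/
noncomputable def Exp (r d : ℕ) : Finset (Fin r →₀ ℕ) := (Finset.Icc 1 d).biUnion (Ex r)

lemma mem_Exp {d : ℕ} {m : Fin r →₀ ℕ} : m ∈ Exp r d ↔ 1 ≤ m.degree ∧ m.degree ≤ d := by
  simp [Exp, mem_Ex]

lemma choose_step (hr : 1 ≤ r) (d : ℕ) :
    Nat.choose (r + (d + 1)) r = Nat.choose (r + d) r + Nat.choose (r - 1 + (d + 1)) (r - 1) := by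
  obtain ⟨s, rfl⟩ : ∃ s, r = s + 1 := ⟨r - 1, by omega⟩
  rw [show s + 1 + (d + 1) = (s + 1 + d) + 1 by ring, Nat.choose_succ_succ, add_comm,
    show s + 1 - 1 + (d + 1) = s + 1 + d by omega]
  rfl

lemma card_Exp (hr : 1 ≤ r) (d : ℕ) : (Exp r d).card + 1 = Nat.choose (r + d) r := by
  classical
  have h : (Exp r d).card = ∑ i ∈ Finset.Icc 1 d, (Ex r i).card := by
    rw [Exp, Finset.card_biUnion]
    intro i _ j _ hij
    rw [Function.onFun, Finset.disjoint_left]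
    intro m h1 h2
    rw [mem_Ex] at h1 h2
    exact hij (h1.symm.trans h2)
  rw [h]
  induction d with
  | zero => simp
  | succ d ih =>
    rw [Finset.sum_Icc_succ_top (by omega), choose_step hr, ← ih, card_Ex hr]
    · ring
    · rw [Exp, Finset.card_biUnion]
      intro i _ j _ hij
      rw [Function.onFun, Finset.disjoint_left]
      intro m h1 h2
      rw [mem_Ex] at h1 h2
      exact hij (h1.symm.trans h2)

lemma tdle_iff {d : ℕ} {f : MvPolynomial (Fin r) F} :
    f.totalDegree ≤ d ↔ ∀ m ∈ f.support, m.degree ≤ d := by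
  rw [totalDegree, Finset.sup_le_iff]
  rfl

lemma support_subset_Exp {d : ℕ} {f : MvPolynomial (Fin r) F} :
    f.support ⊆ Exp r d ↔ f.totalDegree ≤ d ∧ f.coeff 0 = 0 := by
  constructor
  · intro h
    constructor
    · rw [tdle_iff]
      intro m hm
      exact (mem_Exp.1 (h hm)).2
    · by_contra h0
      have := (mem_Exp.1 (h (mem_support_iff.2 h0))).1
      simp at this
  · rintro ⟨h1, h2⟩ m hm
    rw [mem_Exp]
    constructor
    · rcases Nat.eq_zero_or_pos m.degree with h | h
      · rw [Finsupp.degree_eq_zero_iff] at h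
        rw [mem_support_iff, h] at hm
        exact absurd h2 hm
      · exact h
    · rw [tdle_iff] at h1
      exact h1 m hm

/-- monic polynomials of degree d, no constant term -/
def PP (r : ℕ) (F : Type*) [Field F] (d : ℕ) : Set (MvPolynomial (Fin r) F) :=
  {f | f.totalDegree = d ∧ degLex.leadingCoeff f = 1 ∧ f.coeff 0 = 0}

lemma PP_eq (d : ℕ) (hd : 1 ≤ d) : PP r F d = SM F (Exp r d) \ SM F (Exp r (d - 1)) := by
  ext f
  simp only [PP, SM, Set.mem_ofPred_eq, Set.mem_sdiff, support_subset_Exp]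
  constructor
  · rintro ⟨h1, h2, h3⟩
    refine ⟨⟨⟨h1.le, h3⟩, h2⟩, ?_⟩
    rintro ⟨⟨h4, -⟩, -⟩
    omega
  · rintro ⟨⟨⟨h1, h3⟩, h2⟩, h4⟩
    refine ⟨?_, h2, h3⟩
    by_contra h5
    exact h4 ⟨⟨by omega, h3⟩, h2⟩

lemma finite_PP [Fintype F] (d : ℕ) (hd : 1 ≤ d) : (PP r F d).Finite := by
  rw [PP_eq d hd]
  exact (finite_SM _).subset Set.sdiff_subset

lemma ncard_PP [Fintype F] (hr : 1 ≤ r) (d : ℕ) (hd : 1 ≤ d) :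
    (Fintype.card F - 1) * (PP r F d).ncard + Fintype.card F ^ (Nat.choose (r + (d - 1)) r - 1) =
      Fintype.card F ^ (Nat.choose (r + d) r - 1) := by
  have h1 := ncard_SM (F := F) (Exp r d)
  have h2 := ncard_SM (F := F) (Exp r (d - 1))
  have c1 := card_Exp hr d
  have c2 := card_Exp hr (d - 1)
  have hsub : SM F (Exp r (d - 1)) ⊆ SM F (Exp r d) := by
    rintro f ⟨h, h'⟩
    refine ⟨h.trans ?_, h'⟩
    intro m hm
    rw [mem_Exp] at hm ⊢
    omega
  rw [← c1, ← c2, Nat.add_sub_cancel, Nat.add_sub_cancel, PP_eq d hd]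
  have h3 := Set.ncard_sdiff_add_ncard_of_subset hsub (finite_SM _)
  rw [← h1, ← h2, ← h3]
  ring

/-- bad polynomials -/
def Bad (r : ℕ) (F : Type*) [Field F] (d : ℕ) : Set (MvPolynomial (Fin r) F) :=
  {f | f ∈ PP r F d ∧ ProperPow (top f)}

lemma totalDegree_sub_top_lt {f : MvPolynomial (Fin r) F} {d : ℕ} (hd : 1 ≤ d)
    (hf : f.totalDegree = d) : (f - top f).totalDegree ≤ d - 1 := by
  rw [tdle_iff]
  intro m hm
  rw [mem_support_iff, coeff_sub, top, coeff_homogeneousComponent, hf] at hm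
  have hm' : m.degree ≠ d := by
    intro h; rw [if_pos h] at hm; simp at hm
  rw [if_neg hm', sub_zero] at hm
  have : m.degree ≤ d := by
    rw [← hf]; exact le_totalDegree (mem_support_iff.2 hm)
  change m.degree ≤ d - 1
  omega

lemma ncard_Bad_le [Fintype F] (hr : 1 ≤ r) (d : ℕ) (hd : 1 ≤ d) :
    (Bad r F d).ncard ≤ ∑ i ∈ Finset.Icc 1 (d / 2), (SM F (Ex r i)).ncard *
      Fintype.card F ^ (Nat.choose (r + (d - 1)) r - 1) := by
  classical
  have hsub : Bad r F d ⊆ ⋃ i ∈ Finset.Icc 1 (d / 2),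
      (fun p : MvPolynomial (Fin r) F × MvPolynomial (Fin r) F => p.1 ^ (d / i) + p.2) ''
        (SM F (Ex r i) ×ˢ SP F (Exp r (d - 1))) := by
    rintro f ⟨⟨h1, h2, h3⟩, hp⟩
    have hhom : (top f).IsHomogeneous d := by rw [← h1]; exact top_isHomogeneous f
    obtain ⟨t, i, u, ht, hti, hu, hul, hfu⟩ :=
      properPow_monic hhom (by rw [leadingCoeff_top, h2]) hp
    have hi : 1 ≤ i := by
      rcases Nat.eq_zero_or_pos i with h | h
      · rw [h] at hti; omega
      · exact h
    have hdi : d / i = t := by rw [← hti]; exact Nat.mul_div_cancel _ hi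
    have hid : i ≤ d / 2 := by
      rw [Nat.le_div_iff_mul_le (by norm_num)]
      nlinarith
    simp only [Set.mem_iUnion]
    refine ⟨i, Finset.mem_Icc.2 ⟨hi, hid⟩, (u, f - top f), ⟨⟨?_, hul⟩, ?_⟩, ?_⟩
    · intro m hm
      rw [mem_Ex]
      rw [← hu (mem_support_iff.1 hm)]
      rw [Finsupp.degree_eq_weight_one]; rfl
    · change (f - top f).support ⊆ _
      rw [support_subset_Exp]
      refine ⟨totalDegree_sub_top_lt hd h1, ?_⟩
      rw [coeff_sub, h3, top, coeff_homogeneousComponent, h1, if_neg]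
      · simp
      · simp; omega
    · simp only
      rw [hdi, ← hfu]; ring
  refine (Set.ncard_le_ncard hsub ?_).trans ?_
  · apply Set.Finite.biUnion (Finset.finite_toSet _)
    intro i _
    exact ((finite_SM _).prod (finite_SP _)).image _
  · refine (Finset.set_ncard_biUnion_le _ _).trans ?_
    apply Finset.sum_le_sum
    intro i _
    refine (Set.ncard_image_le ((finite_SM _).prod (finite_SP _))).trans ?_
    rw [Set.ncard_prod, ncard_SP]
    have := card_Exp hr (d - 1)
    rw [show (Exp r (d - 1)).card = Nat.choose (r + (d - 1)) r - 1 by omega]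

end Count
section DBounds
open MonomialOrder

variable {r : ℕ} {F : Type} [Field F]

/-- coefficient extension -/
def extc {d : ℕ} (a : Fin (d - 1) → F) : ℕ → F
  | 0 => 0
  | i + 1 => if h : i < d - 1 then a ⟨i, h⟩ else 0

/-- composition map -/
noncomputable def Phi (d : ℕ) (a : Fin (d - 1) → F) (h : MvPolynomial (Fin r) F) :
    MvPolynomial (Fin r) F :=
  h ^ d + ∑ i ∈ Finset.range d, extc a i • h ^ i

lemma extc_inj {d : ℕ} {a b : Fin (d - 1) → F} (h : ∀ i < d, extc a i = extc b i) : a = b := by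
  funext ⟨i, hi⟩
  have := h (i + 1) (by omega)
  simpa [extc, hi] using this

/-- the set being counted -/
def DD (r : ℕ) (F : Type) [Field F] (n : ℕ) : Set (MvPolynomial (Fin r) F) :=
  {f : MvPolynomial (Fin r) F | f.totalDegree = n ∧ MvMonic f ∧
    MvPolynomial.coeff 0 f = 0 ∧
    ∃ (g : Polynomial F) (h : MvPolynomial (Fin r) F),
      2 ≤ g.natDegree ∧ 0 < h.totalDegree ∧ f = Polynomial.aeval h g}

lemma theta_aeval (g : Polynomial F) (h : MvPolynomial (Fin r) F) :
    theta r F (Polynomial.aeval h g) =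
      (g.map (algebraMap F (MvPolynomial (Fin r) F))).comp (theta r F h) := by
  rw [← Polynomial.aeval_algHom_apply, Polynomial.comp, Polynomial.eval₂_map, Polynomial.aeval_def]
  rfl

lemma totalDegree_aeval (g : Polynomial F) (h : MvPolynomial (Fin r) F) :
    (Polynomial.aeval h g).totalDegree = g.natDegree * h.totalDegree := by
  rw [← natDegree_theta, theta_aeval, Polynomial.natDegree_comp, natDegree_theta,
    Polynomial.natDegree_map]

lemma leadingCoeff_aeval (g : Polynomial F) (h : MvPolynomial (Fin r) F)
    (hh : 0 < h.totalDegree) :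
    degLex.leadingCoeff (Polynomial.aeval h g) =
      g.leadingCoeff * degLex.leadingCoeff h ^ g.natDegree := by
  rw [← leadingCoeff_top, ← leadingCoeff_theta, theta_aeval, Polynomial.leadingCoeff_comp
    (by rw [natDegree_theta]; omega), Polynomial.natDegree_map, leadingCoeff_theta,
    Polynomial.leadingCoeff_map, MvPolynomial.algebraMap_eq, leadingCoeff_C_mul',
    leadingCoeff_pow, leadingCoeff_top]

lemma coeff_zero_aeval (g : Polynomial F) (h : MvPolynomial (Fin r) F) (hz : h.coeff 0 = 0) :
    (Polynomial.aeval h g).coeff 0 = g.coeff 0 := by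
  rw [← constantCoeff_eq] at hz ⊢
  rw [Polynomial.aeval_def, Polynomial.hom_eval₂, hz, Polynomial.eval₂_at_zero]
  simp [MvPolynomial.algebraMap_eq]

lemma Phi_of_monic (g : Polynomial F) (h : MvPolynomial (Fin r) F) (hg : g.Monic)
    (h0 : g.coeff 0 = 0) :
    Polynomial.aeval h g = Phi g.natDegree (fun i => g.coeff (i + 1)) h := by
  rw [Polynomial.aeval_eq_sum_range, Finset.sum_range_succ, Phi, add_comm]
  congr 1
  · rw [show g.coeff g.natDegree = 1 from hg, one_smul]
  · apply Finset.sum_congr rfl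
    intro i hi
    congr 1
    cases i with
    | zero => simp [extc, h0]
    | succ i =>
      have := Finset.mem_range.1 hi
      simp only [extc]
      rw [dif_pos (by omega)]

/-- the polynomial with given coefficients -/
noncomputable def gpol (d : ℕ) (a : Fin (d - 1) → F) : Polynomial F :=
  Polynomial.X ^ d + ∑ i ∈ Finset.range d, Polynomial.C (extc a i) * Polynomial.X ^ i

lemma gpol_aeval (d : ℕ) (a : Fin (d - 1) → F) (h : MvPolynomial (Fin r) F) :
    Polynomial.aeval h (gpol d a) = Phi d a h := by
  simp [gpol, Phi, MvPolynomial.algebraMap_eq, MvPolynomial.C_mul']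

lemma gpol_monic (d : ℕ) (a : Fin (d - 1) → F) :
    (gpol d a).Monic ∧ (gpol d a).natDegree = d := by
  have hlt : (∑ i ∈ Finset.range d, Polynomial.C (extc a i) * Polynomial.X ^ i).degree < (d : WithBot ℕ) := by
    refine (Polynomial.degree_sum_le _ _).trans_lt ?_
    rw [Finset.sup_lt_iff (WithBot.bot_lt_coe _)]
    intro i hi
    exact (Polynomial.degree_C_mul_X_pow_le _ _).trans_lt
      (by exact_mod_cast Finset.mem_range.1 hi)
  refine ⟨Polynomial.monic_X_pow_add hlt, ?_⟩
  rw [gpol]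
  apply Polynomial.natDegree_eq_of_degree_eq_some
  rw [Polynomial.degree_add_eq_left_of_degree_lt] <;> simp [hlt]

lemma gpol_coeff_zero (d : ℕ) (hd : 1 ≤ d) (a : Fin (d - 1) → F) : (gpol d a).coeff 0 = 0 := by
  rw [gpol, Polynomial.coeff_add, Polynomial.finsetSum_coeff, Polynomial.coeff_X_pow,
    if_neg (by omega), zero_add]
  apply Finset.sum_eq_zero
  intro i _
  rw [Polynomial.coeff_C_mul, Polynomial.coeff_X_pow]
  cases i with
  | zero => simp [extc]
  | succ i => simp

lemma Phi_mem {n d : ℕ} (hn : 1 ≤ n) (hd : 2 ≤ d) (hdn : d ∣ n) (a : Fin (d - 1) → F)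
    {h : MvPolynomial (Fin r) F} (hh : h ∈ PP r F (n / d)) : Phi d a h ∈ DD r F n := by
  obtain ⟨h1, h2, h3⟩ := hh
  obtain ⟨g1, g2⟩ := gpol_monic d a
  have hpos : 0 < h.totalDegree := by
    rw [h1]; exact Nat.div_pos (Nat.le_of_dvd hn hdn) (by omega)
  rw [← gpol_aeval]
  refine ⟨?_, ?_, ?_, gpol d a, h, by omega, hpos, rfl⟩
  · rw [totalDegree_aeval, g2, h1, Nat.mul_div_cancel' hdn]
  · rw [mvMonic_iff, leadingCoeff_aeval _ _ hpos, h2, g1]; simp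
  · rw [coeff_zero_aeval _ _ h3, gpol_coeff_zero d (by omega)]

lemma DD_subset {n : ℕ} (hn : 1 ≤ n) :
    DD r F n ⊆ ⋃ d ∈ n.divisors.filter (2 ≤ ·),
      (fun p : (Fin (d - 1) → F) × MvPolynomial (Fin r) F => Phi d p.1 p.2) ''
        (Set.univ ×ˢ PP r F (n / d)) := by
  rintro f ⟨f1, f2, f3, g, h, hg, hh, rfl⟩
  rw [mvMonic_iff] at f2
  set c := degLex.leadingCoeff h with hc
  set b := h.coeff 0 with hb
  have hh0 : h ≠ 0 := by rintro rfl; simp at hh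
  have hc0 : c ≠ 0 := by simpa [hc] using hh0
  set lin : Polynomial F := Polynomial.C c * Polynomial.X + Polynomial.C b with hlin
  set lin' : Polynomial F := Polynomial.C c⁻¹ * Polynomial.X + Polynomial.C (-(c⁻¹ * b)) with hlin'
  set g' := g.comp lin with hg'
  set h' := Polynomial.aeval h lin' with hh'
  have hlind : lin.natDegree = 1 := Polynomial.natDegree_linear hc0
  have hlind' : lin'.natDegree = 1 := Polynomial.natDegree_linear (inv_ne_zero hc0)
  have hlc' : lin'.leadingCoeff = c⁻¹ := Polynomial.leadingCoeff_linear (inv_ne_zero hc0)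
  have hcomp : Polynomial.aeval h' lin = h := by
    simp only [hh', hlin, hlin', map_add, map_mul, Polynomial.aeval_C, Polynomial.aeval_X,
      MvPolynomial.algebraMap_eq, map_neg]
    have : (C c : MvPolynomial (Fin r) F) * C c⁻¹ = 1 := by
      rw [← map_mul, mul_inv_cancel₀ hc0, C_1]
    linear_combination (h - C b) * this
  have hgh : Polynomial.aeval h' g' = Polynomial.aeval h g := by
    rw [hg', Polynomial.aeval_comp, hcomp]
  have hd' : h'.totalDegree = h.totalDegree := by rw [hh', totalDegree_aeval, hlind', one_mul]
  have hl' : degLex.leadingCoeff h' = 1 := by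
    rw [hh', leadingCoeff_aeval _ _ hh, hlind', hlc', pow_one, ← hc, inv_mul_cancel₀ hc0]
  have hz' : h'.coeff 0 = 0 := by
    simp only [hh', hlin', map_add, map_mul, Polynomial.aeval_C, Polynomial.aeval_X,
      MvPolynomial.algebraMap_eq, coeff_add, coeff_C_mul, coeff_zero_C, ← hb]
    ring
  have hgd : g'.natDegree = g.natDegree := by
    rw [hg', Polynomial.natDegree_comp, hlind, mul_one]
  rw [← hgh] at f1 f2 f3 ⊢
  have hgm : g'.Monic := by
    rw [leadingCoeff_aeval _ _ (by omega), hl', one_pow, mul_one] at f2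
    exact f2
  rw [coeff_zero_aeval _ _ hz'] at f3
  rw [totalDegree_aeval] at f1
  simp only [Set.mem_iUnion]
  refine ⟨g'.natDegree, ?_, (fun i => g'.coeff (i + 1), h'), ⟨Set.mem_univ _, ?_, hl', hz'⟩, ?_⟩
  · rw [Finset.mem_filter, Nat.mem_divisors]
    exact ⟨⟨⟨_, f1.symm⟩, by omega⟩, by omega⟩
  · rw [← f1, Nat.mul_div_cancel_left _ (by omega)]
  · exact (Phi_of_monic g' h' hgm f3).symm

variable [Fintype F]

lemma finite_pairs {n d : ℕ} (hn : 1 ≤ n) (hd : 2 ≤ d) (hdn : d ∣ n) :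
    ((Set.univ : Set (Fin (d - 1) → F)) ×ˢ PP r F (n / d)).Finite :=
  Set.finite_univ.prod (finite_PP _ (Nat.div_pos (Nat.le_of_dvd hn hdn) (by omega)))

lemma finite_cover {n : ℕ} (hn : 1 ≤ n) :
    (⋃ d ∈ n.divisors.filter (2 ≤ ·),
      (fun p : (Fin (d - 1) → F) × MvPolynomial (Fin r) F => Phi d p.1 p.2) ''
        (Set.univ ×ˢ PP r F (n / d))).Finite := by
  apply Set.Finite.biUnion (Finset.finite_toSet _)
  intro d hd
  have hd' := Finset.mem_filter.1 (Finset.mem_coe.1 hd)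
  exact (finite_pairs hn hd'.2 (Nat.dvd_of_mem_divisors hd'.1)).image _

lemma finite_DD {n : ℕ} (hn : 1 ≤ n) : (DD r F n).Finite := (finite_cover hn).subset (DD_subset hn)

lemma DD_upper {n : ℕ} (hn : 1 ≤ n) :
    (DD r F n).ncard ≤ ∑ d ∈ n.divisors.filter (2 ≤ ·),
      Fintype.card F ^ (d - 1) * (PP r F (n / d)).ncard := by
  refine (Set.ncard_le_ncard (DD_subset hn) (finite_cover hn)).trans ?_
  refine (Finset.set_ncard_biUnion_le _ _).trans ?_
  apply Finset.sum_le_sum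
  intro d hd
  have hd' := Finset.mem_filter.1 hd
  refine (Set.ncard_image_le (finite_pairs hn hd'.2 (Nat.dvd_of_mem_divisors hd'.1))).trans ?_
  rw [Set.ncard_prod, Set.ncard_univ]
  simp

lemma DD_lower_prime {n l : ℕ} (hn : 1 ≤ n) (hl : l.Prime) (hln : l ∣ n) :
    Fintype.card F ^ (l - 1) * (PP r F (n / l)).ncard ≤
      (DD r F n).ncard + Fintype.card F ^ (l - 1) * (Bad r F (n / l)).ncard := by
  have hk : 0 < n / l := Nat.div_pos (Nat.le_of_dvd hn hln) hl.pos
  have hinj : Set.InjOn (fun p : (Fin (l - 1) → F) × MvPolynomial (Fin r) F => Phi l p.1 p.2)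
      (Set.univ ×ˢ (PP r F (n / l) \ Bad r F (n / l))) := by
    rintro ⟨a, h⟩ ⟨-, hh⟩ ⟨b, k⟩ ⟨-, hk'⟩ heq
    obtain ⟨⟨h1, h2, h3⟩, h4⟩ := hh
    obtain ⟨⟨k1, k2, k3⟩, k4⟩ := hk'
    have hnp : ¬ ProperPow (top h) := fun hp => h4 ⟨⟨h1, h2, h3⟩, hp⟩
    obtain ⟨e1, e2⟩ := collision_inj hl hk h1 k1 h2 k2 h3 k3 hnp (extc a) (extc b) rfl rfl heq
    simp only at e1
    rw [e1, extc_inj e2]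
  have hsub : (fun p : (Fin (l - 1) → F) × MvPolynomial (Fin r) F => Phi l p.1 p.2) ''
      (Set.univ ×ˢ (PP r F (n / l) \ Bad r F (n / l))) ⊆ DD r F n := by
    rintro _ ⟨⟨a, h⟩, ⟨-, hh⟩, rfl⟩
    exact Phi_mem hn hl.two_le hln a hh.1
  have h1 := Set.ncard_le_ncard hsub (finite_DD hn)
  rw [hinj.ncard_image, Set.ncard_prod, Set.ncard_univ] at h1
  have hB : Bad r F (n / l) ⊆ PP r F (n / l) := fun f hf => hf.1
  have h2 := Set.ncard_sdiff_add_ncard_of_subset hB (finite_PP _ hk)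
  rw [← h2, mul_add]
  have h3 : Nat.card (Fin (l - 1) → F) = Fintype.card F ^ (l - 1) := by simp
  rw [h3] at h1
  omega

lemma DD_lower_linear {n : ℕ} (hn : 2 ≤ n) :
    Fintype.card F ^ (n - 1) * (PP r F 1).ncard ≤ (DD r F n).ncard := by
  have hinj : Set.InjOn (fun p : (Fin (n - 1) → F) × MvPolynomial (Fin r) F => Phi n p.1 p.2)
      (Set.univ ×ˢ PP r F 1) := by
    rintro ⟨a, h⟩ ⟨-, hh⟩ ⟨b, k⟩ ⟨-, hk'⟩ heq
    obtain ⟨h1, h2, h3⟩ := hh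
    obtain ⟨k1, k2, k3⟩ := hk'
    obtain ⟨e1, e2⟩ := collision_inj_linear (by omega) h1 k1 h2 k2 h3 k3 (extc a) (extc b) heq
    simp only at e1
    rw [e1, extc_inj e2]
  have hsub : (fun p : (Fin (n - 1) → F) × MvPolynomial (Fin r) F => Phi n p.1 p.2) ''
      (Set.univ ×ˢ PP r F 1) ⊆ DD r F n := by
    rintro _ ⟨⟨a, h⟩, ⟨-, hh⟩, rfl⟩
    refine Phi_mem (by omega) hn dvd_rfl a ?_
    rw [Nat.div_self (by omega)]; exact hh
  have h1 := Set.ncard_le_ncard hsub (finite_DD (by omega))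
  rw [hinj.ncard_image, Set.ncard_prod, Set.ncard_univ] at h1
  have h3 : Nat.card (Fin (n - 1) → F) = Fintype.card F ^ (n - 1) := by simp
  rw [h3] at h1
  exact h1

end DBounds
section Numeric

lemma choose_superadd (t a b : ℕ) :
    Nat.choose (t + 1 + a) (t + 1) + Nat.choose (t + 1 + b) (t + 1) ≤
      Nat.choose (t + 1 + (a + b)) (t + 1) + 1 := by
  induction b with
  | zero => simp
  | succ b ih =>
    have h1 : Nat.choose (t + 1 + (b + 1)) (t + 1) =
        Nat.choose (t + 1 + b) t + Nat.choose (t + 1 + b) (t + 1) :=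
      Nat.choose_succ_succ (t + 1 + b) t
    have h2 : Nat.choose (t + 1 + (a + (b + 1))) (t + 1) =
        Nat.choose (t + 1 + (a + b)) t + Nat.choose (t + 1 + (a + b)) (t + 1) :=
      Nat.choose_succ_succ (t + 1 + (a + b)) t
    have h3 : Nat.choose (t + 1 + b) t ≤ Nat.choose (t + 1 + (a + b)) t :=
      Nat.choose_le_choose t (by omega)
    omega

lemma choose_half {s : ℕ} (hs : 1 ≤ s) (k : ℕ) :
    2 * Nat.choose (s + k / 2) s ≤ Nat.choose (s + k) s + 1 := by
  obtain ⟨t, rfl⟩ := Nat.exists_eq_add_of_le' hs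
  have h1 := choose_superadd t (k / 2) (k / 2)
  have h2 : Nat.choose (t + 1 + (k / 2 + k / 2)) (t + 1) ≤ Nat.choose (t + 1 + k) (t + 1) :=
    Nat.choose_le_choose _ (by omega)
  omega

lemma choose_strict {s : ℕ} (hs : 1 ≤ s) {i h : ℕ} (hih : i ≤ h) :
    Nat.choose (s + i) s + (h - i) ≤ Nat.choose (s + h) s := by
  induction h, hih using Nat.le_induction with
  | base => simp
  | succ h hih ih =>
    obtain ⟨t, rfl⟩ := Nat.exists_eq_add_of_le' hs
    have h1 : Nat.choose (t + 1 + (h + 1)) (t + 1) =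
        Nat.choose (t + 1 + h) t + Nat.choose (t + 1 + h) (t + 1) :=
      Nat.choose_succ_succ (t + 1 + h) t
    have h2 : 0 < Nat.choose (t + 1 + h) t := Nat.choose_pos (by omega)
    omega

/-- Monotonicity in `r`. -/
lemma exp_mono_r {k j X Y r₀ : ℕ} (hjk : j + 1 ≤ k)
    (h0 : 2 * Nat.choose (r₀ + j) r₀ + X ≤
      Nat.choose (r₀ + k) r₀ + Nat.choose (r₀ + k - 1) r₀ + Y) {r : ℕ} (hr : r₀ ≤ r) :
    2 * Nat.choose (r + j) r + X ≤ Nat.choose (r + k) r + Nat.choose (r + k - 1) r + Y := by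
  induction r, hr using Nat.le_induction with
  | base => exact h0
  | succ r hr ih =>
    obtain ⟨k, rfl⟩ := Nat.exists_eq_add_of_le' (show 1 ≤ k by omega)
    have e1 : Nat.choose (r + 1 + j) (r + 1) = Nat.choose (r + j) r + Nat.choose (r + j) (r + 1) := by
      rw [show r + 1 + j = (r + j) + 1 by ring, Nat.choose_succ_succ]
    have e2 : Nat.choose (r + 1 + (k + 1)) (r + 1) =
        Nat.choose (r + (k + 1)) r + Nat.choose (r + (k + 1)) (r + 1) := by
      rw [show r + 1 + (k + 1) = (r + (k + 1)) + 1 by ring, Nat.choose_succ_succ]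
    have e3 : Nat.choose (r + 1 + (k + 1) - 1) (r + 1) =
        Nat.choose (r + k) r + Nat.choose (r + k) (r + 1) := by
      rw [show r + 1 + (k + 1) - 1 = (r + k) + 1 by omega, Nat.choose_succ_succ]
    have e4 : r + (k + 1) - 1 = r + k := by omega
    rw [e4] at ih
    have i1 : Nat.choose (r + j) (r + 1) ≤ Nat.choose (r + k) (r + 1) :=
      Nat.choose_le_choose _ (by omega)
    have i2 : Nat.choose (r + k) (r + 1) ≤ Nat.choose (r + (k + 1)) (r + 1) :=
      Nat.choose_le_choose _ (by omega)
    omega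

lemma two_choose_two (j : ℕ) : 2 * Nat.choose (2 + j) 2 = (j + 2) * (j + 1) := by
  rw [Nat.choose_two_right, show 2 + j - 1 = j + 1 by omega, add_comm 2 j]
  exact Nat.mul_div_cancel' (Nat.even_mul_pred_self (j + 2)).two_dvd

lemma six_choose_three (j : ℕ) : 6 * Nat.choose (3 + j) 3 = (j + 3) * (j + 2) * (j + 1) := by
  induction j with
  | zero => simp
  | succ j ih =>
    have h1 : Nat.choose (3 + (j + 1)) 3 = Nat.choose (3 + j) 2 + Nat.choose (3 + j) 3 :=
      Nat.choose_succ_succ (3 + j) 2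
    have h2 := two_choose_two (j + 1)
    rw [show 2 + (j + 1) = 3 + j by ring] at h2
    rw [h1]
    nlinarith

lemma exp_base {k l j d : ℕ} (hl : l.Prime) (hlk : l ≤ k) (hjd : j * d = k * l) (hd : l < d)
    (hmin : ∀ p, p.Prime → p ∣ k → l ≤ p) (h1 : j = 1 → 2 * l ≤ k + 3) :
    (j + 2) * (j + 1) + 2 * d + 2 * j ≤ (k + 1) * (k + 1) + 2 * l + 4 := by
  have hl2 := hl.two_le
  have hj0 : 1 ≤ j := by
    rcases Nat.eq_zero_or_pos j with rfl | h
    · have : 0 < k * l := Nat.mul_pos (by omega) (by omega)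
      omega
    · exact h
  have hjk : j < k := by
    by_contra! hc
    have : k * l < j * d := Nat.mul_lt_mul_of_le_of_lt hc hd (by omega)
    omega
  rcases eq_or_lt_of_le hj0 with rfl | hj2
  · have := h1 rfl
    have hd' : d = k * l := by simpa using hjd
    subst hd'
    obtain ⟨c, rfl⟩ := Nat.exists_eq_add_of_le' (show 1 ≤ k by omega)
    nlinarith
  by_cases hk : k.Prime
  · have hkj : ¬ k ∣ j := fun h => by have := Nat.le_of_dvd (by omega) h; omega
    have hkd : k ∣ d := (hk.dvd_mul.1 (hjd ▸ Dvd.intro _ rfl)).resolve_left hkj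
    obtain ⟨c, rfl⟩ := hkd
    have hjl : j * c = l := by
      have : k * (j * c) = k * l := by rw [← hjd]; ring
      exact Nat.eq_of_mul_eq_mul_left (by omega) this
    have hj : j = l := ((Nat.dvd_prime hl).1 ⟨c, hjl.symm⟩).resolve_left (by omega)
    subst hj
    have hc : c = 1 := by
      have : j * c = j * 1 := by omega
      exact Nat.eq_of_mul_eq_mul_left (by omega) this
    subst hc
    rcases hl.eq_two_or_odd with h | h
    · subst h; nlinarith
    · have hko := hk.eq_two_or_odd
      have : j + 2 ≤ k := by omega
      nlinarith
  · have hl2k : l * l ≤ k := by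
      have h1 := Nat.minFac_sq_le_self (by omega : 0 < k) hk
      have h2 := hmin _ (Nat.minFac_prime (by omega : k ≠ 1)) (Nat.minFac_dvd k)
      nlinarith
    have hjk2 : j + 2 ≤ k := by
      by_contra! hc
      have e : k = j + 1 := by omega
      subst e
      have hcop : Nat.Coprime j (j + 1) := by simp
      have : j ∣ l := hcop.dvd_of_dvd_mul_left (hjd ▸ Dvd.intro _ rfl)
      have := Nat.le_of_dvd (by omega) this
      nlinarith
    rcases le_or_gt k (2 * j) with h | h
    · have hd2 : d ≤ 2 * l := by
        by_contra! hc
        have : j * (2 * l) < j * d := Nat.mul_lt_mul_of_pos_left hc (by omega)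
        nlinarith
      nlinarith
    · have hd2 : 2 * d ≤ k * l := by nlinarith
      have : 2 * (k * l) ≤ k * k := by nlinarith
      nlinarith

/-- The main exponent inequality. -/
lemma exp_main {r k l j d : ℕ} (hr : 2 ≤ r) (hl : l.Prime) (hlk : l ≤ k) (hjd : j * d = k * l)
    (hd : l < d) (hmin : ∀ p, p.Prime → p ∣ k → l ≤ p)
    (hex : ¬ (r = 2 ∧ k.Prime ∧ k ≤ 2 * l - 5)) :
    j + 1 ≤ k ∧ 1 ≤ j ∧ 2 * (Nat.choose (r + j) r + d + j) + Nat.choose (r - 1 + k) (r - 1) ≤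
      2 * (Nat.choose (r + k) r + l) + 4 := by
  have hl2 := hl.two_le
  have hj0 : 1 ≤ j := by
    rcases Nat.eq_zero_or_pos j with rfl | h
    · have : 0 < k * l := Nat.mul_pos (by omega) (by omega)
      omega
    · exact h
  have hjk : j < k := by
    by_contra! hc
    have : k * l < j * d := Nat.mul_lt_mul_of_le_of_lt hc hd (by omega)
    omega
  refine ⟨hjk, hj0, ?_⟩
  have hstep : Nat.choose (r + k) r = Nat.choose (r + k - 1) r + Nat.choose (r - 1 + k) (r - 1) := by
    have := choose_step (r := r) (by omega) (k - 1)
    rw [show k - 1 + 1 = k by omega, show r + (k - 1) = r + k - 1 by omega] at this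
    exact this
  have key : 2 * Nat.choose (r + j) r + (2 * d + 2 * j) ≤
      Nat.choose (r + k) r + Nat.choose (r + k - 1) r + (2 * l + 4) := by
    by_cases h : j = 1 → 2 * l ≤ k + 3
    · apply exp_mono_r hjk _ hr
      have hb := exp_base hl hlk hjd hd hmin h
      have e1 := two_choose_two j
      have e2 := two_choose_two k
      have e3 := two_choose_two (k - 1)
      rw [show 2 + (k - 1) = 2 + k - 1 by omega, show k - 1 + 2 = k + 1 by omega,
        show k - 1 + 1 = k by omega] at e3
      nlinarith
    · push Not at h
      obtain ⟨rfl, h⟩ := h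
      have hd' : d = k * l := by simpa using hjd
      have hkp : k.Prime := by
        by_contra hk
        have h1 := Nat.minFac_sq_le_self (by omega : 0 < k) hk
        have h2 := hmin _ (Nat.minFac_prime (by omega : k ≠ 1)) (Nat.minFac_dvd k)
        nlinarith
      have hne : k ≤ 2 * l - 5 := by
        rcases hkp.eq_two_or_odd with h' | h' <;> omega
      have hr3 : 3 ≤ r := by
        rcases eq_or_lt_of_le hr with h' | h'
        · exact absurd ⟨h'.symm, hkp, hne⟩ hex
        · exact h'
      apply exp_mono_r hjk _ hr3
      have e1 := six_choose_three 1
      have e2 := six_choose_three k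
      have e3 := six_choose_three (k - 1)
      rw [show 3 + (k - 1) = 3 + k - 1 by omega, show k - 1 + 3 = k + 2 by omega,
        show k - 1 + 2 = k + 1 by omega, show k - 1 + 1 = k by omega] at e3
      have : k * l + l * 1 ≤ k * l + l := by omega
      have h4 : k * l + k ≤ k * k + l := by nlinarith
      subst hd'
      nlinarith [sq_nonneg ((k:ℤ) - 2), mul_self_nonneg ((k:ℤ)), Nat.zero_le (k*k*k)]
  omega

lemma pow_cmp {Q : ℝ} (hQ : 1 ≤ Q) {a b C t : ℕ} (h : 2 * a + C + 2 * t ≤ 2 * b + 2) :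
    Q ^ a ≤ Q ^ b * Q⁻¹ ^ t * Q ^ (-(C : ℝ) / 2 + 1) := by
  have hQ0 : 0 < Q := by linarith
  rw [inv_pow, ← Real.rpow_natCast Q a, ← Real.rpow_natCast Q b, ← Real.rpow_natCast Q t,
    ← Real.rpow_neg hQ0.le, ← Real.rpow_add hQ0, ← Real.rpow_add hQ0]
  apply Real.rpow_le_rpow_of_exponent_le hQ
  have : (2 * a + C + 2 * t : ℝ) ≤ 2 * b + 2 := by exact_mod_cast h
  linarith

/-- The size of a family. -/
noncomputable def NN (Q : ℝ) (r d j : ℕ) : ℝ :=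
  Q ^ (Nat.choose (r + j) r + d - 3) * (1 - Q⁻¹ ^ (Nat.choose (r - 1 + j) (r - 1))) / (1 - Q⁻¹)

lemma choose_ge_three {r j : ℕ} (hr : 2 ≤ r) (hj : 1 ≤ j) : 3 ≤ Nat.choose (r + j) r := by
  have h1 : Nat.choose (r + 1) r ≤ Nat.choose (r + j) r := Nat.choose_le_choose _ (by omega)
  rw [Nat.choose_succ_self_right] at h1
  omega

lemma NN_eq {Q : ℝ} (hQ : 2 ≤ Q) {r d j : ℕ} (hr : 2 ≤ r) (hd : 1 ≤ d) (hj : 1 ≤ j) {P : ℝ}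
    (hP : (Q - 1) * P + Q ^ (Nat.choose (r + (j - 1)) r - 1) = Q ^ (Nat.choose (r + j) r - 1)) :
    Q ^ (d - 1) * P = NN Q r d j := by
  have hstep := choose_step (r := r) (by omega) (j - 1)
  rw [show j - 1 + 1 = j by omega] at hstep
  have h3 := choose_ge_three hr hj
  have hB : 1 ≤ Nat.choose (r + (j - 1)) r := Nat.choose_pos (by omega)
  unfold NN
  generalize Nat.choose (r - 1 + j) (r - 1) = C at *
  generalize Nat.choose (r + j) r = A at *
  generalize Nat.choose (r + (j - 1)) r = B at *
  obtain ⟨B, rfl⟩ := Nat.exists_eq_add_of_le' hB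
  obtain ⟨d, rfl⟩ := Nat.exists_eq_add_of_le' hd
  subst hstep
  have hQ1 : Q - 1 ≠ 0 := by linarith
  have hQ0 : Q ≠ 0 := by linarith
  rw [show B + 1 + C - 1 = B + C by omega, show B + 1 - 1 = B by omega] at hP
  have hP' : P = (Q ^ (B + C) - Q ^ B) / (Q - 1) := by
    field_simp; linarith
  obtain ⟨e, he⟩ : ∃ e, B + C = e + 1 := ⟨B + C - 1, by omega⟩
  rw [show B + 1 + C + (d + 1) - 3 = e + d by omega, show d + 1 - 1 = d by omega, hP', inv_pow]
  have hi : (1 : ℝ) - Q⁻¹ = (Q - 1) / Q := by field_simp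
  have hC : Q ^ (e + 1) * (Q ^ C)⁻¹ = Q ^ B := by
    rw [← he, pow_add]; field_simp
  rw [hi, he, ← hC]
  field_simp
  ring

lemma NN_nonneg {Q : ℝ} (hQ : 2 ≤ Q) (r d j : ℕ) : 0 ≤ NN Q r d j := by
  unfold NN
  have h1 : Q⁻¹ ≤ 1 := inv_le_one_of_one_le₀ (by linarith)
  have h0 : 0 ≤ Q⁻¹ := by positivity
  have h2 : Q⁻¹ ^ (Nat.choose (r - 1 + j) (r - 1)) ≤ 1 := pow_le_one₀ h0 h1
  have : 0 ≤ 1 - Q⁻¹ := by linarith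
  have : 0 ≤ 1 - Q⁻¹ ^ (Nat.choose (r - 1 + j) (r - 1)) := by linarith
  positivity

lemma NN_le_main {Q : ℝ} (hQ : 2 ≤ Q) {r k l j d : ℕ} (hr : 2 ≤ r) (hl : l.Prime) (hlk : l ≤ k)
    (hjd : j * d = k * l) (hd : l < d) (hmin : ∀ p, p.Prime → p ∣ k → l ≤ p)
    (hex : ¬ (r = 2 ∧ k.Prime ∧ k ≤ 2 * l - 5)) :
    NN Q r d j ≤ NN Q r l k * Q ^ (-(Nat.choose (r - 1 + k) (r - 1) : ℝ) / 2 + 1) *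
      Q⁻¹ ^ (j - 1) := by
  obtain ⟨hjk, hj, he⟩ := exp_main hr hl hlk hjd hd hmin hex
  have h3 := choose_ge_three hr hj
  have h3' := choose_ge_three hr (by omega : 1 ≤ k)
  have h1 : Q⁻¹ ≤ 1 := inv_le_one_of_one_le₀ (by linarith)
  have h1' : 0 < 1 - Q⁻¹ := by
    have : Q⁻¹ < 1 := inv_lt_one_of_one_lt₀ (by linarith)
    linarith
  have h0 : 0 ≤ Q⁻¹ := by positivity
  have hc := pow_cmp (Q := Q) (by linarith) (a := Nat.choose (r + j) r + d - 3)
    (b := Nat.choose (r + k) r + l - 3) (C := Nat.choose (r - 1 + k) (r - 1)) (t := j - 1)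
    (by omega)
  have hm : 1 - Q⁻¹ ^ (Nat.choose (r - 1 + j) (r - 1)) ≤
      1 - Q⁻¹ ^ (Nat.choose (r - 1 + k) (r - 1)) := by
    have := pow_le_pow_of_le_one h0 h1 (Nat.choose_le_choose (r - 1) (by omega : r - 1 + j ≤ r - 1 + k))
    linarith
  have hp : 0 ≤ 1 - Q⁻¹ ^ (Nat.choose (r - 1 + j) (r - 1)) := by
    have := pow_le_one₀ (n := Nat.choose (r - 1 + j) (r - 1)) h0 h1
    linarith
  have := mul_le_mul hc hm hp (by positivity)
  have := div_le_div_of_nonneg_right this h1'.le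
  unfold NN
  refine this.trans (le_of_eq ?_)
  ring

lemma geom_bound {Q : ℝ} (hQ : 2 ≤ Q) (N : ℕ) : ∑ i ∈ Finset.range N, Q⁻¹ ^ i ≤ (1 - Q⁻¹)⁻¹ := by
  have h1 : Q⁻¹ < 1 := inv_lt_one_of_one_lt₀ (by linarith)
  have h0 : 0 ≤ Q⁻¹ := by positivity
  rw [← tsum_geometric_of_lt_one h0 h1]
  exact (summable_geometric_of_lt_one h0 h1).sum_le_tsum _ (fun _ _ => by positivity)

/-- Lower bound numerics. -/
lemma bad_bound {Q : ℝ} (hQ : 2 ≤ Q) {r k : ℕ} (hr : 2 ≤ r) (hk : 2 ≤ k) {P B : ℝ} (M : ℕ → ℝ)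
    (hP : (Q - 1) * P + Q ^ (Nat.choose (r + (k - 1)) r - 1) = Q ^ (Nat.choose (r + k) r - 1))
    (hM : ∀ i, (Q - 1) * M i + 1 = Q ^ Nat.choose (r - 1 + i) (r - 1))
    (hB : B ≤ ∑ i ∈ Finset.Icc 1 (k / 2), M i * Q ^ (Nat.choose (r + (k - 1)) r - 1)) :
    B ≤ P * (2 * Q ^ (-(Nat.choose (r - 1 + k) (r - 1) : ℝ) / 2 + 1) / (1 - Q⁻¹)) := by
  have hQ0 : 0 < Q := by linarith
  have hQ1 : 0 < Q - 1 := by linarith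
  have h1' : 0 < 1 - Q⁻¹ := by
    have : Q⁻¹ < 1 := inv_lt_one_of_one_lt₀ (by linarith)
    linarith
  have hstep := choose_step (r := r) (by omega) (k - 1)
  rw [show k - 1 + 1 = k by omega] at hstep
  have hb : 1 ≤ Nat.choose (r + (k - 1)) r := Nat.choose_pos (by omega)
  have hC : 1 ≤ Nat.choose (r - 1 + k) (r - 1) := Nat.choose_pos (by omega)
  have hhalf := choose_half (s := r - 1) (by omega) k
  set h := k / 2 with hh
  set c := Nat.choose (r - 1 + h) (r - 1) with hc
  have hMi : ∀ i ∈ Finset.Icc 1 h, M i ≤ Q ^ c / (Q - 1) * Q⁻¹ ^ (h - i) := by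
    intro i hi
    have hs := choose_strict (s := r - 1) (by omega) (Finset.mem_Icc.1 hi).2
    have e : Q ^ Nat.choose (r - 1 + i) (r - 1) ≤ Q ^ c * Q⁻¹ ^ (h - i) := by
      rw [inv_pow, ← div_eq_mul_inv, le_div_iff₀ (by positivity), ← pow_add]
      exact pow_le_pow_right₀ (by linarith) hs
    rw [div_mul_eq_mul_div, le_div_iff₀ hQ1]
    have := hM i
    linarith
  have hsum : ∑ i ∈ Finset.Icc 1 h, M i ≤ Q ^ c / (Q - 1) * (1 - Q⁻¹)⁻¹ := by
    refine (Finset.sum_le_sum hMi).trans ?_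
    rw [← Finset.mul_sum]
    refine mul_le_mul_of_nonneg_left ?_ (by positivity)
    refine le_trans (le_of_eq ?_) (geom_bound hQ h)
    refine Finset.sum_bij (fun i _ => h - i) ?_ ?_ ?_ ?_
    · intro i hi; simp at hi ⊢; omega
    · intro i hi j hj hij; simp at hi hj; omega
    · intro i hi; simp at hi; exact ⟨h - i, by simp; omega, by omega⟩
    · intro i hi; rfl
  rw [← Finset.sum_mul] at hB
  generalize Nat.choose (r - 1 + k) (r - 1) = C at *
  generalize Nat.choose (r + k) r = A at *
  generalize Nat.choose (r + (k - 1)) r = b at *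
  obtain ⟨C, rfl⟩ := Nat.exists_eq_add_of_le' hC
  obtain ⟨b, rfl⟩ := Nat.exists_eq_add_of_le' hb
  subst hstep
  rw [show b + 1 + (C + 1) - 1 = b + C + 1 by omega, show b + 1 - 1 = b by omega] at *
  have hPge : Q ^ b * Q ^ C ≤ P := by
    have h1C : 1 ≤ Q ^ C := one_le_pow₀ (by linarith)
    have : (Q - 1) * (Q ^ b * Q ^ C) ≤ (Q - 1) * P := by
      have e : Q ^ (b + C + 1) = Q ^ b * Q ^ C * Q := by ring
      have : Q ^ b * 1 ≤ Q ^ b * Q ^ C := mul_le_mul_of_nonneg_left h1C (by positivity)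
      nlinarith
    exact le_of_mul_le_mul_left this hQ1
  have hcmp := pow_cmp (Q := Q) (by linarith) (a := c) (b := C + 1) (C := C + 1) (t := 0) (by omega)
  set W := Q ^ (-((C + 1 : ℕ) : ℝ) / 2 + 1) with hW
  have hW0 : 0 < W := Real.rpow_pos_of_pos hQ0 _
  have h2 : Q ^ c / (Q - 1) ≤ Q ^ C * (2 * W) := by
    rw [div_le_iff₀ hQ1]
    refine hcmp.trans ?_
    rw [pow_zero, mul_one, pow_succ]
    have : Q ≤ 2 * (Q - 1) := by linarith
    have := mul_le_mul_of_nonneg_left this (by positivity : 0 ≤ Q ^ C * W)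
    linarith
  calc B ≤ Q ^ c / (Q - 1) * (1 - Q⁻¹)⁻¹ * Q ^ b :=
        hB.trans (mul_le_mul_of_nonneg_right hsum (by positivity))
    _ ≤ Q ^ C * (2 * W) * (1 - Q⁻¹)⁻¹ * Q ^ b := by gcongr
    _ = (Q ^ b * Q ^ C) * (2 * W / (1 - Q⁻¹)) := by ring
    _ ≤ _ := by gcongr

end Numeric
section Assembly

variable {F : Type} [Field F] [Fintype F]

lemma card_two_le : (2 : ℝ) ≤ (Fintype.card F : ℝ) := by
  have : 1 < Fintype.card F := Fintype.one_lt_card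
  exact_mod_cast this

lemma ncard_PP_real {r : ℕ} (hr : 2 ≤ r) (d : ℕ) (hd : 1 ≤ d) :
    ((Fintype.card F : ℝ) - 1) * ((PP r F d).ncard : ℝ) +
      (Fintype.card F : ℝ) ^ (Nat.choose (r + (d - 1)) r - 1) =
      (Fintype.card F : ℝ) ^ (Nat.choose (r + d) r - 1) := by
  have h := ncard_PP (F := F) (r := r) (by omega) d hd
  have h1 : 1 ≤ Fintype.card F := Fintype.card_pos
  have h' := congrArg (Nat.cast : ℕ → ℝ) h
  push_cast [Nat.cast_sub h1] at h'
  exact h'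

lemma ncard_SM_real {r : ℕ} (hr : 2 ≤ r) (i : ℕ) :
    ((Fintype.card F : ℝ) - 1) * ((SM F (Ex r i)).ncard : ℝ) + 1 =
      (Fintype.card F : ℝ) ^ (Nat.choose (r - 1 + i) (r - 1)) := by
  have h := ncard_SM (F := F) (Ex r i)
  rw [card_Ex (by omega)] at h
  have h1 : 1 ≤ Fintype.card F := Fintype.card_pos
  have h' := congrArg (Nat.cast : ℕ → ℝ) h
  push_cast [Nat.cast_sub h1] at h'
  exact h'

lemma DD_upper_real {r n : ℕ} (hr : 2 ≤ r) (hn : 1 ≤ n) :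
    ((DD r F n).ncard : ℝ) ≤
      ∑ d ∈ n.divisors.filter (2 ≤ ·), NN (Fintype.card F : ℝ) r d (n / d) := by
  have h := DD_upper (r := r) (F := F) hn
  have h' : ((DD r F n).ncard : ℝ) ≤ ((∑ d ∈ n.divisors.filter (2 ≤ ·),
    Fintype.card F ^ (d - 1) * (PP r F (n / d)).ncard : ℕ) : ℝ) := by exact_mod_cast h
  refine h'.trans (le_of_eq ?_)
  push_cast
  refine Finset.sum_congr rfl fun d hd => ?_
  simp only [Finset.mem_filter, Nat.mem_divisors] at hd
  have hj : 1 ≤ n / d := Nat.div_pos (Nat.le_of_dvd (by omega) hd.1.1) (by omega)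
  exact NN_eq card_two_le hr (by omega) hj (ncard_PP_real hr _ hj)

lemma upper_main {r k l : ℕ} (hr : 2 ≤ r) (hl : l.Prime) (hlk : l ≤ k)
    (hmin : ∀ p, p.Prime → p ∣ k * l → l ≤ p)
    (hex : ¬ (r = 2 ∧ k.Prime ∧ k ≤ 2 * l - 5)) {Q : ℝ} (hQ : 2 ≤ Q) :
    ∑ d ∈ (k * l).divisors.filter (2 ≤ ·), NN Q r d (k * l / d) ≤
      NN Q r l k + NN Q r l k *
        (2 * Q ^ (-(Nat.choose (r - 1 + k) (r - 1) : ℝ) / 2 + 1) / (1 - Q⁻¹)) := by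
  have hl2 := hl.two_le
  have hn0 : 0 < k * l := Nat.mul_pos (by omega) (by omega)
  have hmem : l ∈ (k * l).divisors.filter (2 ≤ ·) := by
    simp only [Finset.mem_filter, Nat.mem_divisors]
    exact ⟨⟨Dvd.intro_left k rfl, by omega⟩, hl2⟩
  have h1' : 0 < 1 - Q⁻¹ := by
    have : Q⁻¹ < 1 := inv_lt_one_of_one_lt₀ (by linarith)
    linarith
  set W := Q ^ (-(Nat.choose (r - 1 + k) (r - 1) : ℝ) / 2 + 1) with hW
  have hW0 : 0 < W := Real.rpow_pos_of_pos (by linarith) _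
  have hN := NN_nonneg hQ r l k
  rw [← Finset.add_sum_erase _ _ hmem, Nat.mul_div_cancel _ (by omega)]
  refine add_le_add le_rfl ?_
  have hb : ∀ d ∈ ((k * l).divisors.filter (2 ≤ ·)).erase l,
      NN Q r d (k * l / d) ≤ NN Q r l k * W * Q⁻¹ ^ (k * l / d - 1) := by
    intro d hd
    simp only [Finset.mem_erase, Finset.mem_filter, Nat.mem_divisors] at hd
    obtain ⟨hne, ⟨hdn, _⟩, hd2⟩ := hd
    have hld : l ≤ d := by
      refine (hmin _ (Nat.minFac_prime (by omega : d ≠ 1)) ((Nat.minFac_dvd d).trans hdn)).trans ?_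
      exact Nat.minFac_le (by omega)
    exact NN_le_main hQ hr hl hlk (Nat.div_mul_cancel hdn) (by omega)
      (fun p hp hpk => hmin p hp (hpk.mul_right l)) hex
  refine (Finset.sum_le_sum hb).trans ?_
  rw [← Finset.mul_sum]
  have hs : ∑ d ∈ ((k * l).divisors.filter (2 ≤ ·)).erase l, Q⁻¹ ^ (k * l / d - 1) ≤
      (1 - Q⁻¹)⁻¹ := by
    calc _ ≤ ∑ d ∈ (k * l).divisors, Q⁻¹ ^ (k * l / d - 1) := by
          refine Finset.sum_le_sum_of_subset_of_nonneg ?_ (fun _ _ _ => by positivity)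
          exact (Finset.erase_subset _ _).trans (Finset.filter_subset _ _)
      _ = ∑ d ∈ (k * l).divisors, Q⁻¹ ^ (d - 1) :=
          Nat.sum_div_divisors (k * l) (fun d => Q⁻¹ ^ (d - 1))
      _ = ∑ i ∈ (k * l).divisors.image (· - 1), Q⁻¹ ^ i := by
          rw [Finset.sum_image]
          intro a ha b hb hab
          have ha' := Nat.pos_of_mem_divisors ha
          have hb' := Nat.pos_of_mem_divisors hb
          simp only at hab
          omega
      _ ≤ ∑ i ∈ Finset.range (k * l), Q⁻¹ ^ i := by
          refine Finset.sum_le_sum_of_subset_of_nonneg ?_ (fun _ _ _ => by positivity)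
          intro i hi
          obtain ⟨d, hd, rfl⟩ := Finset.mem_image.1 hi
          have := Nat.divisor_le hd
          simp only [Finset.mem_range]
          omega
      _ ≤ _ := geom_bound hQ _
  calc _ ≤ NN Q r l k * W * (1 - Q⁻¹)⁻¹ := by gcongr
    _ ≤ NN Q r l k * W * (1 - Q⁻¹)⁻¹ * 2 := by
        have : 0 ≤ NN Q r l k * W * (1 - Q⁻¹)⁻¹ := by positivity
        linarith
    _ = _ := by ring

/-- Bound for a non-dominant family in the exceptional case. -/
lemma NN_le_exc {Q : ℝ} (hQ : 2 ≤ Q) {n d j C : ℕ} (hj : 1 ≤ j) (hd : 1 ≤ d)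
    (h : (j + 2) * (j + 1) + 2 * d + C ≤ 2 * n + 8) :
    NN Q 2 d j ≤ NN Q 2 n 1 * (Q ^ (-(C : ℝ) / 2 + 1) / (1 - Q⁻¹)) := by
  have h2 := two_choose_two j
  have h3 := choose_ge_three (le_refl 2) hj
  have hQ0 : 0 < Q := by linarith
  have hi1 : Q⁻¹ < 1 := inv_lt_one_of_one_lt₀ (by linarith)
  have h1' : 0 < 1 - Q⁻¹ := by linarith
  have h0 : 0 < Q⁻¹ := by positivity
  have hc := pow_cmp (Q := Q) (by linarith) (a := Nat.choose (2 + j) 2 + d - 3)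
    (b := n) (C := C) (t := 0) (by omega)
  set W := Q ^ (-(C : ℝ) / 2 + 1) with hW
  have hW0 : 0 < W := Real.rpow_pos_of_pos (by linarith) _
  rw [pow_zero, mul_one] at hc
  unfold NN
  rw [show Nat.choose (2 + 1) 2 + n - 3 = n by simp [Nat.choose],
    show Nat.choose (2 - 1 + 1) (2 - 1) = 2 by simp]
  have hp : 1 - Q⁻¹ ^ (Nat.choose (2 - 1 + j) (2 - 1)) ≤ 1 := by
    have : 0 ≤ Q⁻¹ ^ (Nat.choose (2 - 1 + j) (2 - 1)) := by positivity
    linarith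
  have hge : 1 ≤ (1 - Q⁻¹ ^ 2) / (1 - Q⁻¹) := by
    rw [le_div_iff₀ h1']
    nlinarith
  calc _ ≤ Q ^ (Nat.choose (2 + j) 2 + d - 3) * 1 / (1 - Q⁻¹) := by gcongr
    _ ≤ Q ^ n * W / (1 - Q⁻¹) * 1 := by rw [mul_one, mul_one]; gcongr
    _ ≤ Q ^ n * W / (1 - Q⁻¹) * ((1 - Q⁻¹ ^ 2) / (1 - Q⁻¹)) := by gcongr
    _ = _ := by ring

lemma upper_exc {k l : ℕ} (hl : l.Prime) (hlk : l ≤ k) (hk : k.Prime) (hkl : k ≤ 2 * l - 5)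
    {Q : ℝ} (hQ : 2 ≤ Q) :
    ∑ d ∈ (k * l).divisors.filter (2 ≤ ·), NN Q 2 d (k * l / d) ≤
      NN Q 2 (k * l) 1 + NN Q 2 (k * l) 1 *
        (2 * Q ^ (-(Nat.choose (2 - 1 + k) (2 - 1) : ℝ) / 2 + 1) / (1 - Q⁻¹)) := by
  have hl2 := hl.two_le
  have hl5 : 5 ≤ l := by omega
  have hn0 : 0 < k * l := Nat.mul_pos (by omega) (by omega)
  have hmem : k * l ∈ (k * l).divisors.filter (2 ≤ ·) := by
    simp only [Finset.mem_filter, Nat.mem_divisors]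
    exact ⟨⟨dvd_rfl, by omega⟩, by nlinarith⟩
  rw [← Finset.add_sum_erase _ _ hmem, Nat.div_self hn0]
  refine add_le_add le_rfl ?_
  have hC : Nat.choose (2 - 1 + k) (2 - 1) = k + 1 := by simp [add_comm]
  rw [hC]
  have hsub : ((k * l).divisors.filter (2 ≤ ·)).erase (k * l) ⊆ {l, k} := by
    intro d hd
    simp only [Finset.mem_erase, Finset.mem_filter, Nat.mem_divisors] at hd
    obtain ⟨hne, ⟨hdn, _⟩, hd2⟩ := hd
    simp only [Finset.mem_insert, Finset.mem_singleton]
    obtain ⟨a, b, ha, hb, rfl⟩ := exists_dvd_and_dvd_of_dvd_mul hdn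
    rcases (Nat.dvd_prime hk).1 ha with rfl | rfl <;>
      rcases (Nat.dvd_prime hl).1 hb with rfl | rfl
    · omega
    · left; simp
    · right; simp
    · exact absurd rfl hne
  have hA : NN Q 2 l (k * l / l) ≤
      NN Q 2 (k * l) 1 * (Q ^ (-((k + 1 : ℕ) : ℝ) / 2 + 1) / (1 - Q⁻¹)) := by
    rw [Nat.mul_div_cancel _ (by omega)]
    apply NN_le_exc hQ (by omega) (by omega)
    have : k + 5 ≤ 2 * l := by omega
    obtain ⟨c, rfl⟩ := Nat.exists_eq_add_of_le' (show 1 ≤ k by omega)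
    nlinarith
  have hB : NN Q 2 k (k * l / k) ≤
      NN Q 2 (k * l) 1 * (Q ^ (-((k + 1 : ℕ) : ℝ) / 2 + 1) / (1 - Q⁻¹)) := by
    rw [Nat.mul_div_cancel_left _ (by omega)]
    apply NN_le_exc hQ (by omega) (by omega)
    nlinarith
  calc _ ≤ ∑ d ∈ {l, k}, NN Q 2 d (k * l / d) :=
        Finset.sum_le_sum_of_subset_of_nonneg hsub (fun _ _ _ => NN_nonneg hQ _ _ _)
    _ ≤ NN Q 2 l (k * l / l) + NN Q 2 k (k * l / k) := by
        by_cases h : l = k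
        · subst h
          have := NN_nonneg hQ 2 l (l * l / l)
          simp only [Finset.pair_eq_singleton, Finset.sum_singleton]
          linarith
        · rw [Finset.sum_pair h]
    _ ≤ _ := add_le_add hA hB
    _ = _ := by ring

end Assembly

theorem stmt9 (q : ℕ) (F : Type) [Field F] [Fintype F] (hq : Fintype.card F = q)
    (r n : ℕ) (hr : 2 ≤ r) (hn : 4 ≤ n) (hcomp : ¬ n.Prime) (ℓ m : ℕ) (hl : ℓ = n.minFac)
    (hm : m = if r = 2 ∧ (n / ℓ).Prime ∧ n / ℓ ≤ 2 * ℓ - 5 then n else ℓ) :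
    |(Dcount F r n : ℝ) -
        (q : ℝ) ^ (Nat.choose (r + n / m) r + m - 3) *
          (1 - ((q : ℝ)⁻¹) ^ (Nat.choose (r - 1 + n / m) (r - 1))) / (1 - (q : ℝ)⁻¹)| ≤
      (q : ℝ) ^ (Nat.choose (r + n / m) r + m - 3) *
          (1 - ((q : ℝ)⁻¹) ^ (Nat.choose (r - 1 + n / m) (r - 1))) / (1 - (q : ℝ)⁻¹) *
        (2 * (q : ℝ) ^ (-(Nat.choose (r - 1 + n / ℓ) (r - 1) : ℝ) / 2 + 1) / (1 - (q : ℝ)⁻¹)) := by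
  subst hq
  change |((DD r F n).ncard : ℝ) - NN (Fintype.card F : ℝ) r m (n / m)| ≤
    NN (Fintype.card F : ℝ) r m (n / m) * _
  have hQ : (2 : ℝ) ≤ (Fintype.card F : ℝ) := card_two_le
  have hup := DD_upper_real (F := F) hr (by omega : 1 ≤ n)
  have hlp : ℓ.Prime := hl ▸ Nat.minFac_prime (by omega)
  have hl2 := hlp.two_le
  have hln : ℓ ∣ n := hl ▸ Nat.minFac_dvd n
  obtain ⟨k, hk⟩ : ∃ k, n = k * ℓ := ⟨n / ℓ, (Nat.div_mul_cancel hln).symm⟩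
  have hkd : n / ℓ = k := by rw [hk, Nat.mul_div_cancel _ (by omega)]
  have hlk : ℓ ≤ k := by
    have := Nat.minFac_sq_le_self (by omega : 0 < n) hcomp
    rw [← hl] at this
    rw [hk, sq] at this
    exact Nat.le_of_mul_le_mul_right this (by omega)
  have hmin : ∀ p, p.Prime → p ∣ k * ℓ → ℓ ≤ p := by
    intro p hp hpn
    rw [hl]
    exact Nat.minFac_le_of_dvd hp.two_le (hk ▸ hpn)
  rw [hkd] at hm ⊢
  have hB0 : 0 ≤ 2 * (Fintype.card F : ℝ) ^ (-(Nat.choose (r - 1 + k) (r - 1) : ℝ) / 2 + 1) /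
      (1 - (Fintype.card F : ℝ)⁻¹) := by
    have : (Fintype.card F : ℝ)⁻¹ < 1 := inv_lt_one_of_one_lt₀ (by linarith)
    have h1 : 0 < 1 - (Fintype.card F : ℝ)⁻¹ := by linarith
    have h2 : 0 < (Fintype.card F : ℝ) ^ (-(Nat.choose (r - 1 + k) (r - 1) : ℝ) / 2 + 1) :=
      Real.rpow_pos_of_pos (by linarith) _
    positivity
  by_cases hex : r = 2 ∧ k.Prime ∧ k ≤ 2 * ℓ - 5
  · rw [if_pos hex] at hm
    subst hm
    obtain ⟨rfl, hkp, hkl⟩ := hex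
    rw [Nat.div_self (by omega)]
    have hlow := DD_lower_linear (r := 2) (F := F) (by omega : 2 ≤ m)
    have hlow' : (Fintype.card F : ℝ) ^ (m - 1) * ((PP 2 F 1).ncard : ℝ) ≤
      ((DD 2 F m).ncard : ℝ) := by exact_mod_cast hlow
    rw [NN_eq hQ le_rfl (by omega) le_rfl (ncard_PP_real le_rfl 1 le_rfl)] at hlow'
    have hu := upper_exc hlp hlk hkp hkl hQ
    rw [← hk] at hu
    have hN := mul_nonneg (NN_nonneg hQ 2 m 1) hB0
    rw [abs_le]
    constructor <;> linarith
  · rw [if_neg hex] at hm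
    subst hm
    rw [hkd]
    have hk2 : 2 ≤ k := by omega
    have hP := ncard_PP_real (F := F) hr k (by omega)
    have hlow := DD_lower_prime (r := r) (F := F) (by omega : 1 ≤ n) hlp hln
    rw [hkd] at hlow
    have hlow' : (Fintype.card F : ℝ) ^ (m - 1) * ((PP r F k).ncard : ℝ) ≤
      ((DD r F n).ncard : ℝ) + (Fintype.card F : ℝ) ^ (m - 1) * ((Bad r F k).ncard : ℝ) := by
      exact_mod_cast hlow
    have hbad := bad_bound hQ hr hk2 (B := ((Bad r F k).ncard : ℝ))
      (fun i => ((SM F (Ex r i)).ncard : ℝ)) hP (fun i => ncard_SM_real hr i)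
      (by exact_mod_cast ncard_Bad_le (F := F) (r := r) (by omega) k (by omega))
    have hbad' := mul_le_mul_of_nonneg_left hbad
      (by positivity : 0 ≤ (Fintype.card F : ℝ) ^ (m - 1))
    rw [← mul_assoc] at hbad'
    rw [NN_eq hQ hr (by omega) (by omega) hP] at hlow' hbad'
    have hu := upper_main hr hlp hlk hmin hex hQ
    rw [← hk] at hu
    rw [abs_le]
    constructor <;> linarith
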